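/- Let (G,C) be a strongly connected inhomogeneous Mauldin–Williams graph in ℝ^d satisfying the SOSC such that ∫₀^∞ e^{−s₀(G)t} N_{e^{−t}}(C_i) dt < ∞ for all i ∈ V. If G_M = τℤ for some τ > 0, then for every i ∈ V there exist δ > 0 and a τ-periodic function h_i : ℝ → [δ, ∞) such that lim_{n→∞} N_{e^{−(nτ+y)}}(K_i^C) / (h_i(y) e^{s₀(G)(nτ+y)}) = 1 for all y ∈ [0, τ). -/

import Mathlib

open Set Filter Topology MeasureTheory Metric

noncomputable section

/-- Points of `ℝ^d`. -/
abbrev Pt (d : ℕ) := EuclideanSpace ℝ (Fin d)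

/-- The `r`-covering number of `A ⊆ ℝ^d`: the least number of closed balls of
radius `r` needed to cover `A`. -/
noncomputable def coveringNumber {d : ℕ} (A : Set (Pt d)) (r : ℝ) : ℕ :=
  sInf {k : ℕ | ∃ c : Fin k → Pt d, A ⊆ ⋃ i, Metric.closedBall (c i) r}

/-- A Mauldin–Williams graph in `ℝ^d` over a finite directed multigraph with
vertex type `V` and edge type `E`: each vertex `i` carries a non-empty compact
set `X i` equal to the closure of its interior, and each edge `e` carries a
contractive similarity `S e` of ratio `r e ∈ (0,1)` mapping `X (term e)` into
`X (init e)`. -/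
structure MWGraph (d : ℕ) (V E : Type) [Fintype V] [Fintype E] where
  init : E → V
  term : E → V
  X : V → Set (Pt d)
  S : E → Pt d → Pt d
  r : E → ℝ
  X_nonempty : ∀ i, (X i).Nonempty
  X_compact : ∀ i, IsCompact (X i)
  X_regular : ∀ i, closure (interior (X i)) = X i
  r_pos : ∀ e, 0 < r e
  r_lt_one : ∀ e, r e < 1
  S_maps : ∀ e, Set.MapsTo (S e) (X (term e)) (X (init e))
  S_sim : ∀ e x y, dist (S e x) (S e y) = r e * dist x y

namespace MWGraph

variable {d : ℕ} {V E : Type} [Fintype V] [Fintype E]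

variable (G : MWGraph d V E)

/-- `G.IsPathFrom j γ` holds iff the list of edges `γ` is a directed path
starting at vertex `j`. -/
def IsPathFrom : V → List E → Prop
  | _, [] => True
  | j, e :: es => G.init e = j ∧ IsPathFrom (G.term e) es

/-- Terminal vertex of the path `γ` starting at `j`. -/
def pathTerm : V → List E → V
  | j, [] => j
  | _, e :: es => pathTerm (G.term e) es

/-- `S_γ = S_{e₁} ∘ ⋯ ∘ S_{eₙ}` (with `S_∅ = id`). -/
def pathMap : List E → Pt d → Pt d
  | [] => id
  | e :: es => G.S e ∘ pathMap es

/-- `r_γ = r_{e₁} ⋯ r_{eₙ}` (with `r_∅ = 1`). -/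
def pathRatio (γ : List E) : ℝ := (γ.map G.r).prod

/-- The underlying multigraph is strongly connected: for every ordered pair of
vertices there is a (non-empty) directed path from the first to the second. -/
def StronglyConnected : Prop :=
  ∀ i j : V, ∃ γ : List E, γ ≠ [] ∧ G.IsPathFrom i γ ∧ G.pathTerm i γ = j

/-- `K` is the list of graph-directed self-similar sets of `G`: the unique list
of non-empty compact sets with `K i = ⋃_{e ∈ E_i} S_e (K (term e))`. -/
def IsAttractor (K : V → Set (Pt d)) : Prop :=
  (∀ i, IsCompact (K i)) ∧ (∀ i, (K i).Nonempty) ∧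
    ∀ i, K i = ⋃ e ∈ {e : E | G.init e = i}, G.S e '' K (G.term e)

/-- `C` is an admissible list of condensation sets: compact subsets of the `X i`. -/
def IsCondensation (C : V → Set (Pt d)) : Prop :=
  ∀ i, IsCompact (C i) ∧ C i ⊆ G.X i

/-- `K` is the list of inhomogeneous graph-directed self-similar sets of `(G, C)`:
the unique list of non-empty compact sets with
`K i = ⋃_{e ∈ E_i} S_e (K (term e)) ∪ C i`. -/
def IsInhomAttractor (C : V → Set (Pt d)) (K : V → Set (Pt d)) : Prop :=
  (∀ i, IsCompact (K i)) ∧ (∀ i, (K i).Nonempty) ∧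
    ∀ i, K i = (⋃ e ∈ {e : E | G.init e = i}, G.S e '' K (G.term e)) ∪ C i

/-- `G` satisfies the open set condition with the open sets `U`. -/
def IsOSCWith (U : V → Set (Pt d)) : Prop :=
  (∀ i, (U i).Nonempty) ∧ (∀ i, IsOpen (U i)) ∧ (∀ i, Bornology.IsBounded (U i)) ∧
    (∀ i, U i ⊆ G.X i) ∧
    (∀ i, (⋃ e ∈ {e : E | G.init e = i}, G.S e '' U (G.term e)) ⊆ U i) ∧
    ∀ e e' : E, G.init e = G.init e' → e ≠ e' →
      Disjoint (G.S e '' U (G.term e)) (G.S e' '' U (G.term e'))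

/-- The set `{-log r_γ : γ a directed cycle of G}`. -/
def cycleSet : Set ℝ :=
  {x : ℝ | ∃ (j : V) (γ : List E), γ ≠ [] ∧ G.IsPathFrom j γ ∧ G.pathTerm j γ = j ∧
    x = -Real.log (G.pathRatio γ)}

/-- `G_M`, the smallest closed additive subgroup of `ℝ` containing
`{-log r_γ : γ a directed cycle}`. -/
def GM : Set ℝ := closure ((AddSubgroup.closure (G.cycleSet) : AddSubgroup ℝ) : Set ℝ)

variable [DecidableEq V]

/-- The matrix `A_G^s` with entries `(A_G^s)_{ij} = Σ_{e ∈ E_{ij}} r_e^s`. -/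
def Amatrix (s : ℝ) : Matrix V V ℝ :=
  Matrix.of fun i j => ∑ e : E, if G.init e = i ∧ G.term e = j then G.r e ^ s else 0

end MWGraph

/-- Spectral radius of a real square matrix: the largest modulus of a complex
eigenvalue. -/
noncomputable def matrixSpectralRadius {n : Type} [Fintype n] [DecidableEq n]
    (A : Matrix n n ℝ) : ℝ :=
  sSup {x : ℝ | ∃ μ : ℂ, μ ∈ spectrum ℂ (A.map (fun a : ℝ => (a : ℂ))) ∧ x = ‖μ‖}

/-- `s` is the (unique) exponent `s ≥ 0` with `ρ(A_G^s) = 1`, i.e. `s = s₀(G)`. -/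
def IsS0 {d : ℕ} {V E : Type} [Fintype V] [Fintype E] [DecidableEq V]
    (G : MWGraph d V E) (s : ℝ) : Prop :=
  0 ≤ s ∧ matrixSpectralRadius (G.Amatrix s) = 1

open scoped ENNReal

/-! ### Covering numbers -/

section Covering

variable {d : ℕ} {A B : Set (Pt d)} {r : ℝ}

lemma coveringNumber_le_card {s : Finset (Pt d)} (h : A ⊆ ⋃ c ∈ s, closedBall c r) :
    coveringNumber A r ≤ s.card := by
  refine Nat.sInf_le ⟨fun i => (s.equivFin.symm i : Pt d), fun x hx => ?_⟩
  obtain ⟨c, hc, hxc⟩ := mem_iUnion₂.1 (h hx)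
  exact mem_iUnion.2 ⟨s.equivFin ⟨c, hc⟩, by simpa using hxc⟩

lemma exists_finset_cover (hA : Bornology.IsBounded A) (hr : 0 < r) :
    ∃ s : Finset (Pt d), s.card ≤ coveringNumber A r ∧ A ⊆ ⋃ c ∈ s, closedBall c r := by
  classical
  have hne : {k : ℕ | ∃ c : Fin k → Pt d, A ⊆ ⋃ i, closedBall (c i) r}.Nonempty := by
    obtain ⟨t, htf, ht⟩ := Metric.totallyBounded_iff.1
      (hA.isCompact_closure.totallyBounded.subset subset_closure) r hr
    refine ⟨htf.toFinset.card, fun i => ((htf.toFinset.equivFin.symm i : htf.toFinset) : Pt d), fun x hx => ?_⟩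
    obtain ⟨c, hc, hxc⟩ := mem_iUnion₂.1 (ht hx)
    exact mem_iUnion.2 ⟨htf.toFinset.equivFin ⟨c, htf.mem_toFinset.2 hc⟩,
      by simpa using ball_subset_closedBall hxc⟩
  obtain ⟨c, hc⟩ := Nat.sInf_mem hne
  refine ⟨Finset.univ.image c, Finset.card_image_le.trans (by simp; rfl), hc.trans ?_⟩
  intro x hx
  obtain ⟨i, hi⟩ := mem_iUnion.1 hx
  exact mem_iUnion₂.2 ⟨c i, by simp, hi⟩

lemma coveringNumber_mono (hB : Bornology.IsBounded B) (hr : 0 < r) (h : A ⊆ B) :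
    coveringNumber A r ≤ coveringNumber B r := by
  obtain ⟨s, hs, hc⟩ := exists_finset_cover hB hr
  exact (coveringNumber_le_card (h.trans hc)).trans hs

lemma coveringNumber_anti (hA : Bornology.IsBounded A) (hr : 0 < r) {r' : ℝ} (h : r ≤ r') :
    coveringNumber A r' ≤ coveringNumber A r := by
  obtain ⟨s, hs, hc⟩ := exists_finset_cover hA hr
  exact (coveringNumber_le_card
    (hc.trans (iUnion₂_mono fun c _ => closedBall_subset_closedBall h))).trans hs

lemma coveringNumber_empty : coveringNumber (∅ : Set (Pt d)) r = 0 :=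
  Nat.le_zero.1 (coveringNumber_le_card (s := ∅) (by simp))

lemma coveringNumber_union_le (hA : Bornology.IsBounded A) (hB : Bornology.IsBounded B)
    (hr : 0 < r) : coveringNumber (A ∪ B) r ≤ coveringNumber A r + coveringNumber B r := by
  classical
  obtain ⟨s, hs, hc⟩ := exists_finset_cover hA hr
  obtain ⟨s', hs', hc'⟩ := exists_finset_cover hB hr
  refine (coveringNumber_le_card (s := s ∪ s') ?_).trans
    ((Finset.card_union_le _ _).trans (add_le_add hs hs'))
  rw [Finset.set_biUnion_union]
  exact union_subset_union hc hc'

lemma coveringNumber_biUnion_le {ι : Type*} (I : Finset ι) {F : ι → Set (Pt d)}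
    (hF : ∀ i, Bornology.IsBounded (F i)) (hr : 0 < r) :
    coveringNumber (⋃ i ∈ I, F i) r ≤ ∑ i ∈ I, coveringNumber (F i) r := by
  classical
  induction I using Finset.induction_on with
  | empty => simp [coveringNumber_empty]
  | insert a I ha ih =>
    rw [Finset.set_biUnion_insert, Finset.sum_insert ha]
    refine (coveringNumber_union_le (hF a) ?_ hr).trans (by gcongr)
    exact (Bornology.isBounded_biUnion_finset I).2 fun i _ => hF i

/-- A packing by disjoint closed balls bounds the covering number from below. -/
lemma card_le_coveringNumber (hA : Bornology.IsBounded A) (hr : 0 < r) {s : Finset (Pt d)}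
    (hs : ↑s ⊆ A) (hd : (s : Set (Pt d)).PairwiseDisjoint fun x => closedBall x r) :
    s.card ≤ coveringNumber A r := by
  obtain ⟨t, ht, hc⟩ := exists_finset_cover hA hr
  refine le_trans ?_ ht
  have h : ∀ x ∈ s, ∃ c ∈ t, x ∈ closedBall c r := fun x hx => by simpa using hc (hs hx)
  choose! f hft hf using h
  refine Finset.card_le_card_of_injOn f hft fun x hx y hy hxy => ?_
  by_contra hne
  refine Set.disjoint_left.1 (hd hx hy hne) (?_ : f x ∈ _) ?_
  · exact mem_closedBall_comm.1 (hf x hx)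
  · rw [hxy]; exact mem_closedBall_comm.1 (hf y hy)

/-- A similarity of a Euclidean space is surjective. -/
lemma surjective_of_similarity {S : Pt d → Pt d} {c : ℝ} (hc : 0 < c)
    (hS : ∀ x y, dist (S x) (S y) = c * dist x y) : Function.Surjective S := by
  have hiso : Isometry fun x => c⁻¹ • S x := by
    refine Isometry.of_dist_eq fun x y => ?_
    rw [dist_smul₀, hS, Real.norm_of_nonneg (by positivity)]
    field_simp
  intro y
  have hsurj : Function.Surjective hiso.affineIsometryOfStrictConvexSpace :=
    (hiso.affineIsometryOfStrictConvexSpace.toAffineIsometryEquiv rfl).surjective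
  obtain ⟨x, hx⟩ := hsurj (c⁻¹ • y)
  exact ⟨x, smul_right_injective _ (inv_ne_zero hc.ne') hx⟩

lemma image_closedBall_of_similarity {S : Pt d → Pt d} {c : ℝ} (hc : 0 < c)
    (hS : ∀ x y, dist (S x) (S y) = c * dist x y) (x : Pt d) (ρ : ℝ) :
    S '' closedBall x ρ = closedBall (S x) (c * ρ) := by
  ext z
  obtain ⟨y, rfl⟩ := surjective_of_similarity hc hS z
  have hinj : Function.Injective S := fun a b hab => by
    have := hS a b
    rw [hab, dist_self] at this
    exact dist_eq_zero.1 ((mul_eq_zero.1 this.symm).resolve_left hc.ne')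
  rw [hinj.mem_set_image, mem_closedBall, mem_closedBall, hS, mul_le_mul_iff_right₀ hc]

lemma isBounded_image_of_similarity {S : Pt d → Pt d} {c : ℝ}
    (hS : ∀ x y, dist (S x) (S y) = c * dist x y) (hA : Bornology.IsBounded A) :
    Bornology.IsBounded (S '' A) := by
  have : LipschitzWith c.toNNReal S := LipschitzWith.of_dist_le_mul fun x y => by
    rw [hS]; gcongr; exact Real.le_coe_toNNReal c
  exact this.isBounded_image hA

lemma coveringNumber_image {S : Pt d → Pt d} {c : ℝ} (hc : 0 < c)
    (hS : ∀ x y, dist (S x) (S y) = c * dist x y) (hA : Bornology.IsBounded A) (hr : 0 < r) :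
    coveringNumber (S '' A) (c * r) = coveringNumber A r := by
  classical
  apply le_antisymm
  · obtain ⟨s, hs, hc'⟩ := exists_finset_cover hA hr
    refine (coveringNumber_le_card (s := s.image S) ?_).trans (Finset.card_image_le.trans hs)
    rintro _ ⟨x, hx, rfl⟩
    obtain ⟨y, hy, hxy⟩ := mem_iUnion₂.1 (hc' hx)
    refine mem_iUnion₂.2 ⟨S y, Finset.mem_image_of_mem _ hy, ?_⟩
    rw [← image_closedBall_of_similarity hc hS]
    exact mem_image_of_mem _ hxy
  · obtain ⟨s, hs, hc'⟩ :=
      exists_finset_cover (isBounded_image_of_similarity hS hA) (mul_pos hc hr)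
    obtain ⟨g, hg⟩ := (surjective_of_similarity hc hS).hasRightInverse
    refine (coveringNumber_le_card (s := s.image g) ?_).trans (Finset.card_image_le.trans hs)
    intro x hx
    obtain ⟨y, hy, hxy⟩ := mem_iUnion₂.1 (hc' (mem_image_of_mem S hx))
    refine mem_iUnion₂.2 ⟨g y, Finset.mem_image_of_mem _ hy, ?_⟩
    rw [mem_closedBall] at hxy ⊢
    rw [← hg y, hS] at hxy
    exact le_of_mul_le_mul_left hxy hc

end Covering

/-- The covering number at scale `exp (-t)`, as a real number. -/
def coverAt {d : ℕ} (A : Set (Pt d)) (t : ℝ) : ℝ := coveringNumber A (Real.exp (-t))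

section CoverAt

variable {d : ℕ} {A B : Set (Pt d)} {t : ℝ}

lemma coverAt_nonneg : 0 ≤ coverAt A t := Nat.cast_nonneg _

lemma coverAt_empty : coverAt (∅ : Set (Pt d)) t = 0 := by simp [coverAt, coveringNumber_empty]

lemma coverAt_mono (hB : Bornology.IsBounded B) (h : A ⊆ B) : coverAt A t ≤ coverAt B t :=
  Nat.cast_le.2 (coveringNumber_mono hB (Real.exp_pos _) h)

lemma coverAt_mono_right (hA : Bornology.IsBounded A) {t' : ℝ} (h : t ≤ t') :
    coverAt A t ≤ coverAt A t' :=
  Nat.cast_le.2 (coveringNumber_anti hA (Real.exp_pos _) (by gcongr))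

lemma coverAt_union_le (hA : Bornology.IsBounded A) (hB : Bornology.IsBounded B) :
    coverAt (A ∪ B) t ≤ coverAt A t + coverAt B t := by
  unfold coverAt
  exact_mod_cast coveringNumber_union_le hA hB (Real.exp_pos _)

lemma coverAt_biUnion_le {ι : Type*} (I : Finset ι) {F : ι → Set (Pt d)}
    (hF : ∀ i, Bornology.IsBounded (F i)) :
    coverAt (⋃ i ∈ I, F i) t ≤ ∑ i ∈ I, coverAt (F i) t := by
  unfold coverAt
  exact_mod_cast coveringNumber_biUnion_le I hF (Real.exp_pos _)

end CoverAt

namespace MWGraph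

/-- The points of `KC i` whose `2 exp (-t)`-ball is not contained in `U i`. -/
def near {d : ℕ} {V : Type} (U KC : V → Set (Pt d)) (i : V) (t : ℝ) : Set (Pt d) :=
  {x ∈ KC i | ¬ closedBall x (2 * Real.exp (-t)) ⊆ U i}

lemma near_subset {d : ℕ} {V : Type} {U KC : V → Set (Pt d)} (i : V) (t : ℝ) : near U KC i t ⊆ KC i := fun _ hx => hx.1

variable {d : ℕ} {V E : Type} [Fintype V] [Fintype E] (G : MWGraph d V E)

/-- The logarithmic length `-log r_e` of an edge. -/
def len (e : E) : ℝ := -Real.log (G.r e)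

lemma len_pos (e : E) : 0 < G.len e :=
  neg_pos.2 (Real.log_neg (G.r_pos e) (G.r_lt_one e))

lemma exp_neg_len (e : E) : Real.exp (-G.len e) = G.r e := by
  rw [len, neg_neg, Real.exp_log (G.r_pos e)]

lemma r_mul_exp (e : E) (t : ℝ) : G.r e * Real.exp (-(t - G.len e)) = Real.exp (-t) := by
  rw [← G.exp_neg_len, ← Real.exp_add]; congr 1; ring

lemma exists_len_bounds : ∃ a R : ℝ, 0 < a ∧ 0 < R ∧ ∀ e, a ≤ G.len e ∧ G.len e ≤ R := by
  rcases isEmpty_or_nonempty E with h | h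
  · exact ⟨1, 1, one_pos, one_pos, fun e => h.elim e⟩
  · obtain ⟨e₁, h₁⟩ := Finite.exists_min G.len
    obtain ⟨e₂, h₂⟩ := Finite.exists_max G.len
    exact ⟨_, _, G.len_pos e₁, G.len_pos e₂, fun e => ⟨h₁ e, h₂ e⟩⟩

lemma exists_ratio_bound : ∃ ρ : ℝ, 0 ≤ ρ ∧ ρ < 1 ∧ ∀ e, G.r e ≤ ρ := by
  rcases isEmpty_or_nonempty E with h | h
  · exact ⟨0, le_rfl, one_pos, fun e => h.elim e⟩
  · obtain ⟨e, he⟩ := Finite.exists_max G.r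
    exact ⟨_, (G.r_pos e).le, G.r_lt_one e, he⟩

lemma S_injective (e : E) : Function.Injective (G.S e) := fun a b hab => by
  have := G.S_sim e a b
  rw [hab, dist_self] at this
  exact dist_eq_zero.1 ((mul_eq_zero.1 this.symm).resolve_left (G.r_pos e).ne')

lemma S_continuous (e : E) : Continuous (G.S e) :=
  (LipschitzWith.of_dist_le_mul (K := (G.r e).toNNReal) fun x y => by
    rw [G.S_sim]; gcongr; exact Real.le_coe_toNNReal _).continuous

lemma image_closedBall (e : E) (x : Pt d) (t c : ℝ) :
    G.S e '' closedBall x (c * Real.exp (-(t - G.len e))) =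
      closedBall (G.S e x) (c * Real.exp (-t)) := by
  rw [image_closedBall_of_similarity (G.r_pos e) (G.S_sim e), ← G.r_mul_exp e t]
  congr 1; ring

lemma coverAt_image (e : E) {A : Set (Pt d)} (hA : Bornology.IsBounded A) (t : ℝ) :
    coverAt (G.S e '' A) t = coverAt A (t - G.len e) := by
  rw [coverAt, coverAt, ← coveringNumber_image (G.r_pos e) (G.S_sim e) hA (Real.exp_pos _),
    G.r_mul_exp]

lemma isBounded_image (e : E) {A : Set (Pt d)} (hA : Bornology.IsBounded A) :
    Bornology.IsBounded (G.S e '' A) := isBounded_image_of_similarity (G.S_sim e) hA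

lemma isOpen_image (e : E) {W : Set (Pt d)} (hW : IsOpen W) : IsOpen (G.S e '' W) := by
  rw [Metric.isOpen_iff]
  rintro _ ⟨x, hx, rfl⟩
  obtain ⟨ε, hε, hb⟩ := Metric.isOpen_iff.1 hW x hx
  have hr := G.r_pos e
  refine ⟨G.r e * ε, by positivity, fun z hz => ?_⟩
  obtain ⟨y, rfl⟩ := surjective_of_similarity hr (G.S_sim e) z
  refine mem_image_of_mem _ (hb ?_)
  rw [mem_ball, G.S_sim] at hz
  exact lt_of_mul_lt_mul_left hz hr.le

/-- A bounded family that is invariant up to `B` is contained in any closed sub-invariant `B`. -/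
lemma subset_of_invariant {A B : V → Set (Pt d)} (hA : ∀ i, Bornology.IsBounded (A i))
    (hB : ∀ i, IsClosed (B i)) (hBne : ∀ i, (B i).Nonempty)
    (hAB : ∀ i, A i ⊆ (⋃ e ∈ {e : E | G.init e = i}, G.S e '' A (G.term e)) ∪ B i)
    (hBB : ∀ e, G.S e '' B (G.term e) ⊆ B (G.init e)) (i : V) : A i ⊆ B i := by
  obtain ⟨ρ, hρ0, hρ1, hρ⟩ := G.exists_ratio_bound
  have hD : ∃ D : ℝ, ∀ i, ∀ x ∈ A i, infDist x (B i) ≤ D := by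
    have h1 : ∀ i, ∃ D : ℝ, ∀ x ∈ A i, infDist x (B i) ≤ D := fun i => by
      obtain ⟨b, hb⟩ := hBne i
      obtain ⟨D, hD⟩ := (hA i).subset_closedBall b
      exact ⟨D, fun x hx => (infDist_le_dist_of_mem hb).trans (hD hx)⟩
    choose D hD using h1
    obtain ⟨M, hM⟩ := (Set.finite_range D).bddAbove
    exact ⟨M, fun i x hx => (hD i x hx).trans (hM (mem_range_self i))⟩
  obtain ⟨D, hD⟩ := hD
  have key : ∀ n : ℕ, ∀ i, ∀ x ∈ A i, infDist x (B i) ≤ ρ ^ n * |D| := by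
    intro n
    induction n with
    | zero => intro i x hx; simpa using (hD i x hx).trans (le_abs_self D)
    | succ n ih =>
      intro i x hx
      rcases hAB i hx with h | h
      · obtain ⟨e, he, y, hy, rfl⟩ := by simpa only [mem_iUnion, exists_prop] using h
        obtain rfl : G.init e = i := he
        calc infDist (G.S e y) (B (G.init e)) ≤ ρ * infDist y (B (G.term e)) := by
              refine le_of_forall_pos_le_add fun ε hε => ?_
              obtain ⟨b, hb, hyb⟩ := (infDist_lt_iff (hBne (G.term e))).1
                (lt_add_of_pos_right (infDist y (B (G.term e))) hε)
              calc _ ≤ dist (G.S e y) (G.S e b) :=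
                    infDist_le_dist_of_mem (hBB e (mem_image_of_mem _ hb))
                _ = G.r e * dist y b := G.S_sim e y b
                _ ≤ ρ * (infDist y (B (G.term e)) + ε) := by
                  gcongr
                  exact hρ e
                _ ≤ _ := by nlinarith
          _ ≤ ρ * (ρ ^ n * |D|) := by gcongr; exact ih _ y hy
          _ = _ := by ring
      · rw [infDist_zero_of_mem h]; positivity
  intro x hx
  have hlim : Tendsto (fun n : ℕ => ρ ^ n * |D|) atTop (𝓝 (0 * |D|)) :=
    (tendsto_pow_atTop_nhds_zero_of_lt_one hρ0 hρ1).mul_const _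
  rw [zero_mul] at hlim
  have h0 : infDist x (B i) ≤ 0 := ge_of_tendsto' hlim fun n => key n i x hx
  exact ((hB i).mem_iff_infDist_zero (hBne i)).2 (le_antisymm h0 infDist_nonneg)

section Inhom

variable {G} {C K KC U : V → Set (Pt d)}

lemma IsInhomAttractor.image_subset (hKC : G.IsInhomAttractor C KC) (e : E) :
    G.S e '' KC (G.term e) ⊆ KC (G.init e) := by
  conv_rhs => rw [hKC.2.2]
  exact subset_union_of_subset_left
    (subset_biUnion_of_mem (u := fun e => G.S e '' KC (G.term e)) (rfl : G.init e = G.init e)) _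

lemma IsInhomAttractor.condensation_subset (hKC : G.IsInhomAttractor C KC) (i : V) :
    C i ⊆ KC i := by
  conv_rhs => rw [hKC.2.2]
  exact subset_union_right

lemma IsInhomAttractor.isBounded (hKC : G.IsInhomAttractor C KC) (i : V) :
    Bornology.IsBounded (KC i) := (hKC.1 i).isBounded

lemma IsAttractor.subset_inhom (hK : G.IsAttractor K) (hKC : G.IsInhomAttractor C KC) (i : V) :
    K i ⊆ KC i :=
  G.subset_of_invariant (fun i => (hK.1 i).isBounded) (fun i => (hKC.1 i).isClosed) hKC.2.1
    (fun i => by conv_lhs => rw [hK.2.2 i]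
                 exact subset_union_left) hKC.image_subset i

lemma IsOSCWith.image_subset (hU : G.IsOSCWith U) (e : E) :
    G.S e '' U (G.term e) ⊆ U (G.init e) :=
  (subset_biUnion_of_mem (u := fun e => G.S e '' U (G.term e))
    (rfl : G.init e = G.init e)).trans (hU.2.2.2.2.1 _)

lemma IsInhomAttractor.subset_closure (hKC : G.IsInhomAttractor C KC) (hU : G.IsOSCWith U)
    (hCU : ∀ i, C i ⊆ closure (U i)) (i : V) : KC i ⊆ closure (U i) :=
  G.subset_of_invariant (fun i => (hKC.1 i).isBounded) (fun _ => isClosed_closure)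
    (fun i => (hU.1 i).closure)
    (fun i => by conv_lhs => rw [hKC.2.2 i]
                 exact union_subset_union_right _ (hCU i))
    (fun e => (image_closure_subset_closure_image (G.S_continuous e)).trans
      (closure_mono (hU.image_subset e))) i

lemma mem_near_term (hU : G.IsOSCWith U) {e : E} {y : Pt d} {t : ℝ}
    (hy : y ∈ KC (G.term e)) (h : G.S e y ∈ near U KC (G.init e) t) :
    y ∈ near U KC (G.term e) (t - G.len e) := by
  refine ⟨hy, fun hb => h.2 ?_⟩
  rw [← G.image_closedBall]
  exact (image_mono hb).trans (hU.image_subset e)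

variable [DecidableEq V]

lemma IsInhomAttractor.eq_finset (hKC : G.IsInhomAttractor C KC) (i : V) :
    KC i = (⋃ e ∈ Finset.univ.filter fun e => G.init e = i, G.S e '' KC (G.term e)) ∪ C i := by
  conv_lhs => rw [hKC.2.2 i]
  congr 1
  ext x
  simp

lemma IsInhomAttractor.coverAt_le (hKC : G.IsInhomAttractor C KC)
    (i : V) (t : ℝ) :
    coverAt (KC i) t ≤
      ∑ e with G.init e = i, coverAt (KC (G.term e)) (t - G.len e) + coverAt (C i) t := by
  conv_lhs => rw [hKC.eq_finset i]
  have hb : ∀ e, Bornology.IsBounded (G.S e '' KC (G.term e)) :=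
    fun e => G.isBounded_image e (hKC.isBounded _)
  refine (coverAt_union_le ((Bornology.isBounded_biUnion_finset _).2 fun e _ => hb e)
    ((hKC.isBounded i).subset (hKC.condensation_subset i))).trans ?_
  gcongr
  refine (coverAt_biUnion_le _ hb).trans (le_of_eq ?_)
  exact Finset.sum_congr rfl fun e _ => G.coverAt_image e (hKC.isBounded _) t

lemma IsInhomAttractor.le_coverAt (hKC : G.IsInhomAttractor C KC) (hU : G.IsOSCWith U)
    (hCU : ∀ i, C i ⊆ closure (U i)) (i : V) (t : ℝ) :
    ∑ e with G.init e = i, coverAt (KC (G.term e)) (t - G.len e) ≤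
      coverAt (KC i) t + ∑ e with G.init e = i,
        coverAt (near U KC (G.term e) (t - G.len e)) (t - G.len e) := by
  classical
  obtain ⟨s, hs, hc⟩ := exists_finset_cover (hKC.isBounded i) (Real.exp_pos (-t))
  set r := Real.exp (-t) with hr
  let meets : E → Pt d → Prop := fun e c => (closedBall c r ∩ G.S e '' KC (G.term e)).Nonempty
  let excl : E → Finset (Pt d) := fun e =>
    s.filter fun c => meets e c ∧ ∀ e', G.init e' = i → meets e' c → e' = e
  have hexcl : ∑ e with G.init e = i, ((excl e).card : ℝ) ≤ coverAt (KC i) t := by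
    rw [← Nat.cast_sum, ← Finset.card_biUnion]
    · refine Nat.cast_le.2 ((Finset.card_le_card ?_).trans hs)
      exact Finset.biUnion_subset.2 fun e _ => Finset.filter_subset _ _
    · intro e he e' he' hne
      refine Finset.disjoint_left.2 fun c hc hc' => ?_
      simp only [excl, Finset.mem_filter] at hc hc'
      exact hne (hc'.2.2 e (by simpa using he) hc.2.1)
  have hcov : ∀ e, G.init e = i → coverAt (KC (G.term e)) (t - G.len e) ≤
      (excl e).card + coverAt (near U KC (G.term e) (t - G.len e)) (t - G.len e) := by
    rintro e rfl
    have hnb : Bornology.IsBounded (near U KC (G.term e) (t - G.len e)) :=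
      (hKC.isBounded _).subset (near_subset _ _)
    rw [← G.coverAt_image e (hKC.isBounded _), ← G.coverAt_image e hnb]
    have hb' : Bornology.IsBounded (⋃ c ∈ excl e, closedBall c r) :=
      (Bornology.isBounded_biUnion_finset _).2 fun _ _ => isBounded_closedBall
    have hsub : G.S e '' KC (G.term e) ⊆
        (⋃ c ∈ excl e, closedBall c r) ∪ G.S e '' near U KC (G.term e) (t - G.len e) := by
      rintro _ ⟨y, hy, rfl⟩
      obtain ⟨c, hcs, hyc⟩ :=
        mem_iUnion₂.1 (hc (hKC.image_subset e (mem_image_of_mem _ hy)))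
      have hme : meets e c := ⟨_, hyc, mem_image_of_mem _ hy⟩
      by_cases hex : ∀ e', G.init e' = G.init e → meets e' c → e' = e
      · left
        exact mem_iUnion₂.2 ⟨c, Finset.mem_filter.2 ⟨hcs, hme, hex⟩, hyc⟩
      · right
        push Not at hex
        obtain ⟨e', hi, ⟨z, hzc, y', hy', rfl⟩, hne⟩ := hex
        refine mem_image_of_mem _ ⟨hy, fun hball => ?_⟩
        have h1 : closedBall (G.S e y) (2 * Real.exp (-t)) ⊆ G.S e '' U (G.term e) := by
          rw [← G.image_closedBall]; exact image_mono hball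
        have h2 : G.S e' y' ∈ G.S e '' U (G.term e) := by
          refine h1 ?_
          rw [mem_closedBall] at hyc hzc ⊢
          linarith [dist_triangle_right (G.S e' y') (G.S e y) c]
        have h3 : G.S e' y' ∈ closure (G.S e' '' U (G.term e')) :=
          image_closure_subset_closure_image (G.S_continuous e')
            (mem_image_of_mem _ (hKC.subset_closure hU hCU _ hy'))
        obtain ⟨z, hz, hz'⟩ := mem_closure_iff.1 h3 _ (G.isOpen_image e (hU.2.1 _)) h2
        exact Set.disjoint_left.1 (hU.2.2.2.2.2 e' e hi hne) hz' hz
    refine (coverAt_mono (hb'.union (G.isBounded_image e hnb)) hsub).trans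
      ((coverAt_union_le hb' (G.isBounded_image e hnb)).trans ?_)
    gcongr
    exact Nat.cast_le.2 (coveringNumber_le_card le_rfl)
  calc _ ≤ ∑ e with G.init e = i, ((excl e).card +
        coverAt (near U KC (G.term e) (t - G.len e)) (t - G.len e)) :=
        Finset.sum_le_sum fun e he => hcov e (by simpa using he)
    _ ≤ _ := by rw [Finset.sum_add_distrib]; gcongr

end Inhom

end MWGraph

namespace MWGraph

variable {d : ℕ} {V E : Type} [Fintype V] [Fintype E] {G : MWGraph d V E}
  {C K KC U : V → Set (Pt d)}

lemma dist_pathMap_le {ρ : ℝ} (hρ0 : 0 ≤ ρ) (hρ : ∀ e, G.r e ≤ ρ) (γ : List E) (x y : Pt d) :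
    dist (G.pathMap γ x) (G.pathMap γ y) ≤ ρ ^ γ.length * dist x y := by
  induction γ with
  | nil => simp [pathMap]
  | cons e es ih =>
    simp only [pathMap, Function.comp_apply, G.S_sim, List.length_cons]
    calc G.r e * dist (G.pathMap es x) (G.pathMap es y)
        ≤ ρ * (ρ ^ es.length * dist x y) := by gcongr; exact hρ e
      _ = _ := by ring

lemma IsAttractor.exists_path (hK : G.IsAttractor K) (n : ℕ) :
    ∀ i, ∀ x ∈ K i, ∃ γ : List E, γ.length = n ∧ G.IsPathFrom i γ ∧
      x ∈ G.pathMap γ '' K (G.pathTerm i γ) := by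
  induction n with
  | zero => exact fun i x hx => ⟨[], rfl, trivial, by simpa [pathMap, pathTerm] using hx⟩
  | succ n ih =>
    intro i x hx
    rw [hK.2.2 i] at hx
    obtain ⟨e, he, y, hy, rfl⟩ := by simpa only [mem_iUnion, exists_prop] using hx
    obtain ⟨γ, hγ, hp, z, hz, rfl⟩ := ih _ y hy
    exact ⟨e :: γ, by simp [hγ], ⟨he, hp⟩, z, hz, rfl⟩

/-- Every vertex has a path whose cylinder stays away from the boundary of the open set. -/
lemma exists_interior_path (hK : G.IsAttractor K) (hKC : G.IsInhomAttractor C KC)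
    (hU : G.IsOSCWith U) (hUK : ∀ i, (U i ∩ K i).Nonempty) (i : V) :
    ∃ η : List E, G.IsPathFrom i η ∧ ∃ t₀ : ℝ, ∀ t ≥ t₀, ∀ x ∈ near U KC i t,
      x ∉ G.pathMap η '' KC (G.pathTerm i η) := by
  obtain ⟨x₀, hx₀, hxK⟩ := hUK i
  obtain ⟨ε, hε, hball⟩ := Metric.isOpen_iff.1 (hU.2.1 i) x₀ hx₀
  obtain ⟨ρ, hρ0, hρ1, hρ⟩ := G.exists_ratio_bound
  have hbdd : Bornology.IsBounded (⋃ j, KC j) :=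
    Bornology.isBounded_iUnion.2 fun j => hKC.isBounded j
  obtain ⟨D, hD⟩ := Metric.isBounded_iff.1 hbdd
  have hlim : Tendsto (fun n : ℕ => ρ ^ n * D) atTop (𝓝 (0 * D)) :=
    (tendsto_pow_atTop_nhds_zero_of_lt_one hρ0 hρ1).mul_const _
  rw [zero_mul] at hlim
  obtain ⟨n, hn⟩ := (hlim.eventually_lt_const (half_pos hε)).exists
  obtain ⟨γ, rfl, hp, z, hz, hzx⟩ := hK.exists_path n i x₀ hxK
  refine ⟨γ, hp, -Real.log (ε / 4), fun t ht x hx => ?_⟩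
  rintro ⟨y, hy, rfl⟩
  refine hx.2 fun w hw => hball ?_
  have h1 : dist (G.pathMap γ y) x₀ ≤ ρ ^ γ.length * D := by
    rw [← hzx]
    refine (dist_pathMap_le hρ0 hρ γ y z).trans ?_
    gcongr
    exact hD (mem_iUnion.2 ⟨_, hy⟩) (mem_iUnion.2 ⟨_, hK.subset_inhom hKC _ hz⟩)
  have h2 : Real.exp (-t) ≤ ε / 4 := by
    rw [← Real.exp_log (show 0 < ε / 4 by positivity)]
    gcongr
    linarith
  rw [mem_closedBall] at hw
  rw [mem_ball]
  linarith [dist_triangle w (G.pathMap γ y) x₀]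

/-- A finite set of points of `KC i` with disjoint closed `exp (-t)`-balls inside `U i`. -/
structure IsPacking {d : ℕ} {V : Type} (U KC : V → Set (Pt d)) (i : V) (t : ℝ)
    (s : Finset (Pt d)) : Prop where
  subset : ↑s ⊆ KC i
  ball_subset : ∀ x ∈ s, closedBall x (Real.exp (-t)) ⊆ U i
  disjoint : (s : Set (Pt d)).PairwiseDisjoint fun x => closedBall x (Real.exp (-t))

variable [DecidableEq V]

lemma IsPacking.biUnion (hKC : G.IsInhomAttractor C KC) (hU : G.IsOSCWith U) {i : V} {t : ℝ}
    {s : E → Finset (Pt d)}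
    (hs : ∀ e, G.init e = i → IsPacking U KC (G.term e) (t - G.len e) (s e)) :
    ∃ s' : Finset (Pt d), IsPacking U KC i t s' ∧
      s'.card = ∑ e with G.init e = i, (s e).card := by
  classical
  have hball : ∀ e x, G.S e '' closedBall x (Real.exp (-(t - G.len e))) =
      closedBall (G.S e x) (Real.exp (-t)) := fun e x => by
    simpa using G.image_closedBall e x t 1
  have hin : ∀ e, G.init e = i → ∀ x ∈ s e,
      closedBall (G.S e x) (Real.exp (-t)) ⊆ G.S e '' U (G.term e) := fun e he x hx => by
    rw [← hball]; exact image_mono ((hs e he).ball_subset x hx)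
  have hself : ∀ x : Pt d, x ∈ closedBall x (Real.exp (-t)) :=
    fun x => mem_closedBall_self (Real.exp_pos _).le
  have hdis : ∀ e, G.init e = i → ∀ x ∈ s e, ∀ e', G.init e' = i → ∀ x' ∈ s e', e ≠ e' →
      Disjoint (closedBall (G.S e x) (Real.exp (-t))) (closedBall (G.S e' x') (Real.exp (-t))) :=
    fun e he x hx e' he' x' hx' hne =>
      (hU.2.2.2.2.2 e e' (he.trans he'.symm) hne).mono (hin e he x hx) (hin e' he' x' hx')
  refine ⟨(Finset.univ.filter fun e => G.init e = i).biUnion fun e => (s e).image (G.S e),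
    ⟨?_, ?_, ?_⟩, ?_⟩
  · intro z hz
    simp only [Finset.coe_biUnion, Finset.coe_filter, Finset.mem_univ, true_and, mem_ofPred_eq,
      Finset.coe_image, mem_iUnion, exists_prop] at hz
    obtain ⟨e, rfl, x, hx, rfl⟩ := hz
    exact hKC.image_subset e (mem_image_of_mem _ ((hs e rfl).subset hx))
  · intro z hz
    simp only [Finset.mem_biUnion, Finset.mem_filter, Finset.mem_univ, true_and,
      Finset.mem_image] at hz
    obtain ⟨e, rfl, x, hx, rfl⟩ := hz
    exact (hin e rfl x hx).trans (hU.image_subset e)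
  · intro z hz z' hz' hne
    simp only [Finset.coe_biUnion, Finset.coe_filter, Finset.mem_univ, true_and, mem_ofPred_eq,
      Finset.coe_image, mem_iUnion, exists_prop] at hz hz'
    obtain ⟨e, he, x, hx, rfl⟩ := hz
    obtain ⟨e', he', x', hx', rfl⟩ := hz'
    by_cases hee : e = e'
    · subst hee
      have hxx : x ≠ x' := fun h => hne (by rw [h])
      have := (hs e he).disjoint hx hx' hxx
      change Disjoint (closedBall (G.S e x) _) (closedBall (G.S e x') _)
      rw [← hball, ← hball]
      exact (Set.disjoint_image_iff (G.S_injective e)).2 this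
    · exact hdis e he x hx e' he' x' hx' hee
  · rw [Finset.card_biUnion]
    · exact Finset.sum_congr rfl fun e _ => Finset.card_image_of_injective _ (G.S_injective e)
    · intro e he e' he' hne
      refine Finset.disjoint_left.2 fun z hz hz' => ?_
      obtain ⟨x, hx, rfl⟩ := Finset.mem_image.1 hz
      obtain ⟨x', hx', hxx⟩ := Finset.mem_image.1 hz'
      have := hdis e (by simpa using he) x hx e' (by simpa using he') x' hx' hne
      rw [hxx] at this
      exact Set.disjoint_left.1 this (hself _) (hself _)

/-- Lower bound for the covering numbers from the open set condition. -/
lemma exists_lower_bound (hK : G.IsAttractor K) (hKC : G.IsInhomAttractor C KC)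
    (hU : G.IsOSCWith U) (hUK : ∀ i, (U i ∩ K i).Nonempty) {s : ℝ} {v : V → ℝ} (hs : 0 ≤ s)
    (hev : ∀ i, ∑ e with G.init e = i, G.r e ^ s * v (G.term e) = v i) :
    ∃ c t₀ : ℝ, 0 < c ∧ ∀ i, ∀ t ≥ t₀, c * v i * Real.exp (s * t) ≤ coverAt (KC i) t := by
  classical
  obtain ⟨a, R, ha, hR, hlen⟩ := G.exists_len_bounds
  have hstart : ∀ i, ∃ t₀ : ℝ, ∀ t ≥ t₀, ∃ x ∈ KC i, closedBall x (Real.exp (-t)) ⊆ U i := by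
    intro i
    obtain ⟨x, hx, hxK⟩ := hUK i
    obtain ⟨ε, hε, hball⟩ := Metric.isOpen_iff.1 (hU.2.1 i) x hx
    refine ⟨-Real.log (ε / 2), fun t ht => ⟨x, hK.subset_inhom hKC i hxK, ?_⟩⟩
    refine (closedBall_subset_ball ?_).trans hball
    calc Real.exp (-t) ≤ Real.exp (Real.log (ε / 2)) := by gcongr; linarith
      _ = ε / 2 := Real.exp_log (by positivity)
      _ < ε := by linarith
  choose f hf using hstart
  obtain ⟨t₀, ht₀⟩ := (Set.finite_range f).bddAbove
  obtain ⟨M, hM⟩ := (Set.finite_range v).bddAbove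
  have hMpos : 0 < max M 1 := lt_max_of_lt_right one_pos
  set c := (max M 1 * Real.exp (s * (t₀ + R)))⁻¹ with hc
  have hcpos : 0 < c := by positivity
  have key : ∀ n : ℕ, ∀ i, ∀ t ≥ t₀, t ≤ t₀ + R + n * a →
      ∃ p, IsPacking U KC i t p ∧ c * v i * Real.exp (s * t) ≤ p.card := by
    intro n
    have base : ∀ i, ∀ t ≥ t₀, t ≤ t₀ + R →
      ∃ p, IsPacking U KC i t p ∧ c * v i * Real.exp (s * t) ≤ p.card := by
      intro i t ht ht'
      obtain ⟨x, hx, hb⟩ := hf i t ((ht₀ (mem_range_self i)).trans ht)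
      refine ⟨{x}, ⟨by simpa using hx, by simpa using hb, by simp⟩, ?_⟩
      have h1 : v i ≤ max M 1 := (hM (mem_range_self i)).trans (le_max_left _ _)
      calc c * v i * Real.exp (s * t) ≤ c * max M 1 * Real.exp (s * (t₀ + R)) := by gcongr
        _ = 1 := by rw [hc, mul_assoc, inv_mul_cancel₀ (by positivity)]
        _ = _ := by simp
    induction n with
    | zero => intro i t ht ht'; exact base i t ht (by simpa using ht')
    | succ n ih =>
      intro i t ht ht'
      by_cases hlt : t ≤ t₀ + R
      · exact base i t ht hlt
      push Not at hlt
      have hstep : ∀ e, ∃ p, IsPacking U KC (G.term e) (t - G.len e) p ∧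
          c * v (G.term e) * Real.exp (s * (t - G.len e)) ≤ p.card := by
        intro e
        obtain ⟨h1, h2⟩ := hlen e
        refine ih _ _ (by linarith) ?_
        push_cast at ht'
        linarith
      choose p hp hcard using hstep
      obtain ⟨q, hq, hqc⟩ := IsPacking.biUnion hKC hU (i := i) fun e _ => hp e
      refine ⟨q, hq, ?_⟩
      rw [hqc, Nat.cast_sum]
      calc c * v i * Real.exp (s * t)
          = ∑ e with G.init e = i, c * v (G.term e) * Real.exp (s * (t - G.len e)) := by
            rw [← hev i, Finset.mul_sum, Finset.sum_mul]
            refine Finset.sum_congr rfl fun e _ => ?_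
            rw [Real.rpow_def_of_pos (G.r_pos e), len, mul_sub, sub_eq_add_neg, Real.exp_add]
            have : -(s * -Real.log (G.r e)) = Real.log (G.r e) * s := by ring
            rw [this]; ring
        _ ≤ _ := Finset.sum_le_sum fun e _ => hcard e
  refine ⟨c, t₀, hcpos, fun i t ht => ?_⟩
  obtain ⟨n, hn⟩ := exists_nat_ge ((t - t₀ - R) / a)
  rw [div_le_iff₀ ha] at hn
  obtain ⟨p, hp, hpc⟩ := key n i t ht (by linarith)
  exact hpc.trans (Nat.cast_le.2
    (card_le_coveringNumber (hKC.isBounded i) (Real.exp_pos _) hp.subset hp.disjoint))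

end MWGraph

section Perron

open scoped Matrix

variable {n : Type} [Fintype n] [DecidableEq n]

lemma matrix_pow_nonneg {A : Matrix n n ℝ} (hA : ∀ i j, 0 ≤ A i j) (k : ℕ) (i j : n) :
    0 ≤ (A ^ k) i j := by
  induction k generalizing i j with
  | zero => rw [pow_zero, Matrix.one_apply]; split_ifs <;> simp
  | succ k ih =>
    rw [pow_succ, Matrix.mul_apply]
    exact Finset.sum_nonneg fun l _ => mul_nonneg (ih i l) (hA l j)

lemma matrix_mulVec_mono {n : Type} [Fintype n] {A : Matrix n n ℝ} (hA : ∀ i j, 0 ≤ A i j) {x y : n → ℝ}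
    (h : ∀ i, x i ≤ y i) (i : n) : (A *ᵥ x) i ≤ (A *ᵥ y) i :=
  Finset.sum_le_sum fun j _ => mul_le_mul_of_nonneg_left (h j) (hA i j)

/-- A non-negative matrix with all complex eigenvalues in the closed unit disc does not expand
any positive vector uniformly. -/
lemma not_expanding_of_spectrum [Nonempty n] {A : Matrix n n ℝ} (hA : ∀ i j, 0 ≤ A i j)
    (hρ : ∀ μ ∈ spectrum ℂ (A.map (fun a : ℝ => (a : ℂ))), ‖μ‖ ≤ 1) {x : n → ℝ}
    (hx : ∀ i, 0 < x i) {ε : ℝ} (hε : 0 < ε) : ¬ ∀ i, (1 + ε) * x i ≤ (A *ᵥ x) i := by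
  intro hexp
  let : NormedRing (Matrix n n ℂ) := Matrix.linftyOpNormedRing
  let : NormedAlgebra ℂ (Matrix n n ℂ) := Matrix.linftyOpNormedAlgebra
  set B : Matrix n n ℂ := A.map (fun a : ℝ => (a : ℂ)) with hB
  have hpow : ∀ k : ℕ, ∀ i, (1 + ε) ^ k * x i ≤ ((A ^ k) *ᵥ x) i := by
    intro k
    induction k with
    | zero => simp
    | succ k ih =>
      intro i
      rw [pow_succ' A, ← Matrix.mulVec_mulVec]
      refine le_trans ?_ (matrix_mulVec_mono hA ih i)
      have : (A *ᵥ fun i => (1 + ε) ^ k * x i) i = (1 + ε) ^ k * (A *ᵥ x) i := by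
        simp only [Matrix.mulVec, dotProduct, Finset.mul_sum]
        exact Finset.sum_congr rfl fun j _ => by ring
      rw [this, pow_succ, mul_assoc]
      exact mul_le_mul_of_nonneg_left (hexp i) (by positivity)
  have hBk : ∀ k : ℕ, B ^ k = (A ^ k).map (fun a : ℝ => (a : ℂ)) := fun k =>
    (Matrix.map_pow A Complex.ofRealHom k).symm
  obtain ⟨i₀⟩ := ‹Nonempty n›
  let xc : n → ℂ := fun i => (x i : ℂ)
  have hxc : 0 < ‖xc‖ := by
    refine norm_pos_iff.2 fun h => (hx i₀).ne' ?_
    simpa [xc] using congrFun h i₀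
  have hnorm : ∀ k : ℕ, (1 + ε) ^ k * (x i₀ / ‖xc‖) ≤ ‖B ^ k‖ := by
    intro k
    rw [← mul_div_assoc, div_le_iff₀ hxc]
    have h1 : (B ^ k *ᵥ xc) i₀ = (((A ^ k) *ᵥ x) i₀ : ℝ) := by
      rw [hBk]
      simp [Matrix.mulVec, dotProduct, xc]
    calc (1 + ε) ^ k * x i₀ ≤ ((A ^ k) *ᵥ x) i₀ := hpow k i₀
      _ ≤ ‖(B ^ k *ᵥ xc) i₀‖ := by
        rw [h1, Complex.norm_real]; exact le_abs_self _
      _ ≤ ‖B ^ k *ᵥ xc‖ := norm_le_pi_norm _ _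
      _ ≤ ‖B ^ k‖ * ‖xc‖ := Matrix.linfty_opNorm_mulVec _ _
  have hrad : spectralRadius ℂ B ≤ 1 := by
    refine iSup₂_le fun μ hμ => ?_
    exact_mod_cast hρ μ hμ
  have hlim := spectrum.pow_norm_pow_one_div_tendsto_nhds_spectralRadius B
  have hlt : spectralRadius ℂ B < ENNReal.ofReal (1 + ε / 2) :=
    hrad.trans_lt (by
      rw [← ENNReal.ofReal_one]
      exact (ENNReal.ofReal_lt_ofReal_iff (by positivity)).2 (by linarith))
  have hev : ∀ᶠ k : ℕ in atTop, ‖B ^ k‖ ≤ (1 + ε / 2) ^ k := by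
    filter_upwards [hlim.eventually_lt_const hlt, eventually_gt_atTop 0] with k hk hk0
    have hk' := ((ENNReal.ofReal_lt_ofReal_iff (by positivity)).1 hk).le
    calc ‖B ^ k‖ = (‖B ^ k‖ ^ (1 / k : ℝ)) ^ k := by
          rw [one_div, Real.rpow_inv_natCast_pow (norm_nonneg _) hk0.ne']
      _ ≤ _ := by gcongr
  have hratio : Tendsto (fun k : ℕ => ((1 + ε / 2) / (1 + ε)) ^ k) atTop (𝓝 0) :=
    tendsto_pow_atTop_nhds_zero_of_lt_one (by positivity)
      ((div_lt_one (by positivity)).2 (by linarith))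
  obtain ⟨k, hk1, hk2⟩ :=
    (hev.and (hratio.eventually_lt_const (div_pos (hx i₀) hxc))).exists
  rw [div_pow, div_lt_iff₀ (by positivity)] at hk2
  linarith [hnorm k]

/-- Perron–Frobenius: an irreducible non-negative matrix of spectral radius one has a positive
fixed vector. -/
lemma exists_pos_fixed_vector [Nonempty n] {A : Matrix n n ℝ} (hA : ∀ i j, 0 ≤ A i j)
    (hirr : ∀ i j, ∃ k, 0 < (A ^ k) i j) (hρ : matrixSpectralRadius A = 1) :
    ∃ v : n → ℝ, (∀ i, 0 < v i) ∧ A *ᵥ v = v := by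
  classical
  set B : Matrix n n ℂ := A.map (fun a : ℝ => (a : ℂ)) with hB
  have hfin : (spectrum ℂ B).Finite := Matrix.finite_spectrum B
  have hset : {x : ℝ | ∃ μ : ℂ, μ ∈ spectrum ℂ B ∧ x = ‖μ‖} = (fun μ => ‖μ‖) '' spectrum ℂ B := by
    ext x; simp [eq_comm]
  have hfin' : {x : ℝ | ∃ μ : ℂ, μ ∈ spectrum ℂ B ∧ x = ‖μ‖}.Finite := hset ▸ hfin.image _
  have hne : {x : ℝ | ∃ μ : ℂ, μ ∈ spectrum ℂ B ∧ x = ‖μ‖}.Nonempty := by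
    obtain ⟨μ, hμ⟩ := spectrum.nonempty_of_isAlgClosed_of_finiteDimensional ℂ B
    exact ⟨_, μ, hμ, rfl⟩
  have hle : ∀ μ ∈ spectrum ℂ B, ‖μ‖ ≤ 1 := fun μ hμ =>
    hρ ▸ le_csSup hfin'.bddAbove ⟨μ, hμ, rfl⟩
  obtain ⟨μ, hμ, hμ1⟩ := hne.csSup_mem hfin'
  have hμ1 : ‖μ‖ = 1 := hμ1.symm.trans hρ
  rw [← Matrix.spectrum_toLin', ← Module.End.hasEigenvalue_iff_mem_spectrum] at hμ
  obtain ⟨w, hw⟩ := hμ.exists_hasEigenvector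
  have hwe : B *ᵥ w = μ • w := by simpa using hw.apply_eq_smul
  obtain ⟨j₀, hj₀⟩ := Function.ne_iff.1 hw.2
  let u : n → ℝ := fun i => ‖w i‖
  have hu0 : ∀ i, 0 ≤ u i := fun i => norm_nonneg _
  have huj : 0 < u j₀ := norm_pos_iff.2 hj₀
  have hsub : ∀ i, u i ≤ (A *ᵥ u) i := by
    intro i
    calc u i = ‖(B *ᵥ w) i‖ := by rw [hwe]; simp [u, hμ1]
      _ ≤ ∑ j, ‖B i j * w j‖ := norm_sum_le _ _
      _ = (A *ᵥ u) i := by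
        refine Finset.sum_congr rfl fun j _ => ?_
        rw [norm_mul, hB, Matrix.map_apply, Complex.norm_real, Real.norm_of_nonneg (hA i j)]
  choose k hk using hirr
  obtain ⟨m, hm⟩ := (Set.finite_range fun p : n × n => k p.1 p.2).bddAbove
  let P : Matrix n n ℝ := ∑ l ∈ Finset.range (m + 1), A ^ l
  have hP : ∀ i j, 0 < P i j := by
    intro i j
    simp only [P, Matrix.sum_apply]
    refine Finset.sum_pos' (fun l _ => matrix_pow_nonneg hA l i j) ⟨k i j, ?_, hk i j⟩
    exact Finset.mem_range.2 (Nat.lt_succ_of_le (hm ⟨(i, j), rfl⟩))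
  have hPpos : ∀ y : n → ℝ, (∀ i, 0 ≤ y i) → ∀ j, 0 < y j → ∀ i, 0 < (P *ᵥ y) i := by
    intro y hy j hj i
    exact Finset.sum_pos' (fun l _ => mul_nonneg (hP i l).le (hy l))
      ⟨j, Finset.mem_univ j, mul_pos (hP i j) hj⟩
  have hcomm : A * P = P * A := by
    simp only [P, Finset.mul_sum, Finset.sum_mul, ← pow_succ, ← pow_succ']
  have hfix : A *ᵥ u = u := by
    by_contra hneq
    obtain ⟨j, hj⟩ := Function.ne_iff.1 hneq
    have hj' : 0 < (A *ᵥ u - u) j := sub_pos.2 (lt_of_le_of_ne (hsub j) (Ne.symm hj))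
    set x := P *ᵥ u with hx
    have hxpos : ∀ i, 0 < x i := hPpos u hu0 j₀ huj
    have hdiff : ∀ i, 0 < (A *ᵥ x) i - x i := by
      intro i
      have := hPpos (A *ᵥ u - u) (fun i => sub_nonneg.2 (hsub i)) j hj' i
      rwa [Matrix.mulVec_sub, Matrix.mulVec_mulVec, ← hcomm, ← Matrix.mulVec_mulVec] at this
    obtain ⟨i₁, hi₁⟩ := Finite.exists_min fun i => ((A *ᵥ x) i - x i) / x i
    refine not_expanding_of_spectrum hA hle hxpos (div_pos (hdiff i₁) (hxpos i₁)) fun i => ?_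
    have := hi₁ i
    rw [le_div_iff₀ (hxpos i)] at this
    linarith
  refine ⟨u, fun i => ?_, hfix⟩
  have hpowfix : ∀ l : ℕ, (A ^ l) *ᵥ u = u := by
    intro l
    induction l with
    | zero => simp
    | succ l ih => rw [pow_succ, ← Matrix.mulVec_mulVec, hfix, ih]
  rw [← hpowfix (k i j₀)]
  exact Finset.sum_pos' (fun l _ => mul_nonneg (matrix_pow_nonneg hA _ i l) (hu0 l))
    ⟨j₀, Finset.mem_univ _, mul_pos (hk i j₀) huj⟩

end Perron

namespace MWGraph

variable {d : ℕ} {V E : Type} [Fintype V] [Fintype E] [DecidableEq V] {G : MWGraph d V E}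

lemma Amatrix_nonneg (s : ℝ) (i j : V) : 0 ≤ G.Amatrix s i j := by
  refine Finset.sum_nonneg fun e _ => ?_
  split_ifs
  · exact Real.rpow_nonneg (G.r_pos e).le _
  · exact le_rfl

lemma Amatrix_pos (s : ℝ) (e : E) : 0 < G.Amatrix s (G.init e) (G.term e) := by
  refine Finset.sum_pos' (fun e' _ => ?_) ⟨e, Finset.mem_univ e, ?_⟩
  · split_ifs
    · exact Real.rpow_nonneg (G.r_pos e').le _
    · exact le_rfl
  · simpa using Real.rpow_pos_of_pos (G.r_pos e) s

lemma Amatrix_pow_pos (s : ℝ) (γ : List E) (i : V) (hγ : G.IsPathFrom i γ) :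
    0 < (G.Amatrix s ^ γ.length) i (G.pathTerm i γ) := by
  induction γ generalizing i with
  | nil => simp [pathTerm]
  | cons e es ih =>
    obtain ⟨rfl, h⟩ := hγ
    rw [List.length_cons, pow_succ', Matrix.mul_apply]
    exact Finset.sum_pos' (fun l _ => mul_nonneg (Amatrix_nonneg s _ l)
      (matrix_pow_nonneg (Amatrix_nonneg s) _ _ _))
      ⟨G.term e, Finset.mem_univ _, mul_pos (Amatrix_pos s e) (ih _ h)⟩

lemma exists_perron_vector [Nonempty V] (hSC : G.StronglyConnected) {s : ℝ} (hs : IsS0 G s) :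
    ∃ v : V → ℝ, (∀ i, 0 < v i) ∧
      ∀ i, ∑ e with G.init e = i, G.r e ^ s * v (G.term e) = v i := by
  obtain ⟨v, hv, hfix⟩ := exists_pos_fixed_vector (Amatrix_nonneg (G := G) s) (fun i j => by
    obtain ⟨γ, -, hp, rfl⟩ := hSC i j
    exact ⟨_, Amatrix_pow_pos s γ i hp⟩) hs.2
  refine ⟨v, hv, fun i => ?_⟩
  conv_rhs => rw [← hfix]
  simp only [Matrix.mulVec, dotProduct, Amatrix, Matrix.of_apply, Finset.sum_mul, ite_mul,
    zero_mul, ite_and]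
  rw [Finset.sum_comm, Finset.sum_filter]
  refine Finset.sum_congr rfl fun e _ => ?_
  split_ifs <;> simp

end MWGraph

section Renewal

/-- A summable family placed at times `T` is dominated by the increments of a bounded monotone
function. -/
lemma exists_monotone_increments {ι : Type*} {T f : ι → ℝ} (hf : ∀ p, 0 ≤ f p)
    (hs : Summable f) {a : ℝ} (ha : 0 < a) :
    ∃ (Φ : ℝ → ℝ) (M : ℝ), Monotone Φ ∧ Tendsto Φ atTop (𝓝 M) ∧
      ∀ p, f p ≤ Φ (T p) - Φ (T p - a) := by
  classical
  have hsum : ∀ t : ℝ, Summable fun p => if T p ≤ t then f p else 0 := fun t =>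
    hs.of_nonneg_of_le (fun p => by split_ifs <;> simp [hf p])
      (fun p => by split_ifs <;> simp [hf p])
  let Φ : ℝ → ℝ := fun t => ∑' p, if T p ≤ t then f p else 0
  have hmono : Monotone Φ := fun t t' htt => (hsum t).tsum_le_tsum (fun p => by
    split_ifs with h h'
    · exact le_rfl
    · exact absurd (h.trans htt) h'
    · exact hf p
    · exact le_rfl) (hsum t')
  have hbdd : BddAbove (range Φ) := by
    refine ⟨∑' p, f p, ?_⟩
    rintro _ ⟨t, rfl⟩
    exact (hsum t).tsum_le_tsum (fun p => by split_ifs <;> simp [hf p]) hs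
  refine ⟨Φ, _, hmono, tendsto_atTop_ciSup hmono hbdd, fun p => ?_⟩
  have hsingle : Summable fun p' => if p' = p then f p else 0 := (hasSum_ite_eq p (f p)).summable
  have h1 : Φ (T p - a) + f p =
      ∑' p', ((if T p' ≤ T p - a then f p' else 0) + if p' = p then f p else 0) := by
    rw [(hsum _).tsum_add hsingle, tsum_ite_eq]
  have h2 : Φ (T p - a) + f p ≤ Φ (T p) := by
    rw [h1]
    refine ((hsum _).add hsingle).tsum_le_tsum (fun p' => ?_) (hsum _)
    by_cases hp : p' = p
    · subst hp
      simp [not_le.2 ha]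
    · simp only [hp, if_false, add_zero]
      split_ifs with h h'
      · exact le_rfl
      · exact absurd (by linarith) h'
      · exact hf p'
      · exact le_rfl
  linarith

variable {V E : Type} [Fintype E] [DecidableEq V]
  {init term : E → V} {q len : E → ℝ} {k : E → ℤ} {b : V → ℝ} {τ a R T₀ : ℝ}

/-- A lower bound on a time window propagates forward, up to the accumulated errors. -/
lemma renewal_lower_bound (ha : 0 < a) (hlen : ∀ e, a ≤ len e ∧ len e ≤ R)
    (hk : ∀ e, k e * τ = len e - b (init e) + b (term e))
    (hq : ∀ e, 0 < q e) (hq1 : ∀ i, ∑ e with init e = i, q e = 1) {w g : V → ℤ → ℝ}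
    (hw : ∀ i (n : ℤ), T₀ ≤ n * τ + b i →
      w i n = ∑ e with init e = i, q e * w (term e) (n - k e) + g i n)
    {Φ : ℝ → ℝ} (hΦ : Monotone Φ)
    (hg : ∀ i (n : ℤ), T₀ ≤ n * τ + b i → |g i n| ≤ Φ (n * τ + b i) - Φ (n * τ + b i - a))
    {c T₁ : ℝ} (hT : T₀ ≤ T₁)
    (hc : ∀ i (n : ℤ), T₁ - R ≤ n * τ + b i → n * τ + b i < T₁ → c ≤ w i n) :
    ∀ i (n : ℤ), T₁ - R ≤ n * τ + b i → c - (Φ (n * τ + b i) - Φ (T₁ - R)) ≤ w i n := by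
  have key : ∀ m : ℕ, ∀ i (n : ℤ), T₁ - R ≤ n * τ + b i → n * τ + b i < T₁ + m * a →
      c - (Φ (n * τ + b i) - Φ (T₁ - R)) ≤ w i n := by
    intro m
    induction m with
    | zero =>
      intro i n h1 h2
      have := hc i n h1 (by simpa using h2)
      linarith [hΦ h1]
    | succ m ih =>
      intro i n h1 h2
      push_cast at h2
      by_cases hlt : n * τ + b i < T₁
      · linarith [hc i n h1 hlt, hΦ h1]
      push Not at hlt
      have hterm : ∀ e, init e = i →
          c - (Φ (n * τ + b i - a) - Φ (T₁ - R)) ≤ w (term e) (n - k e) := by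
        rintro e rfl
        have htime : ((n - k e : ℤ) : ℝ) * τ + b (term e) = n * τ + b (init e) - len e := by
          push_cast; linarith [hk e]
        obtain ⟨hl1, hl2⟩ := hlen e
        refine le_trans ?_ (ih (term e) (n - k e) (by rw [htime]; linarith)
          (by rw [htime]; linarith))
        rw [htime]
        have : Φ (n * τ + b (init e) - len e) ≤ Φ (n * τ + b (init e) - a) := hΦ (by linarith)
        linarith
      rw [hw i n (hT.trans hlt)]
      have hsum : c - (Φ (n * τ + b i - a) - Φ (T₁ - R)) ≤
          ∑ e with init e = i, q e * w (term e) (n - k e) := by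
        calc _ = ∑ e with init e = i, q e * (c - (Φ (n * τ + b i - a) - Φ (T₁ - R))) := by
              rw [← Finset.sum_mul, hq1, one_mul]
          _ ≤ _ := Finset.sum_le_sum fun e he =>
            mul_le_mul_of_nonneg_left (hterm e (by simpa using he)) (hq e).le
      linarith [hg i n (hT.trans hlt), neg_abs_le (g i n)]
  intro i n h
  obtain ⟨m, hm⟩ := exists_nat_gt ((n * τ + b i - T₁) / a)
  rw [div_lt_iff₀ ha] at hm
  exact key m i n h (by linarith)

/-- Discrete Markov renewal theorem. The hypothesis `hap` (irreducibility and aperiodicity) says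
that every set of states closed under transitions contains all states in the distant past. -/
theorem renewal_limit [Fintype V] [Nonempty V] (hτ : 0 < τ) (ha : 0 < a)
    (hlen : ∀ e, a ≤ len e ∧ len e ≤ R)
    (hk : ∀ e, k e * τ = len e - b (init e) + b (term e))
    (hq : ∀ e, 0 < q e) (hq1 : ∀ i, ∑ e with init e = i, q e = 1)
    (hap : ∀ Z : V → ℤ → Prop, (∀ e n, Z (init e) n → Z (term e) (n - k e)) →
      ∀ i, Z i 0 → ∃ m : ℤ, ∀ j, ∀ n ≤ m, Z j n)
    {w g : V → ℤ → ℝ}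
    (hw : ∀ i (n : ℤ), T₀ ≤ n * τ + b i →
      w i n = ∑ e with init e = i, q e * w (term e) (n - k e) + g i n)
    (hg : ∀ i, Summable fun n : ℤ => if T₀ ≤ n * τ + b i then |g i n| else 0)
    (hB : ∃ B, ∀ i (n : ℤ), T₀ - R ≤ n * τ + b i → n * τ + b i < T₀ → |w i n| ≤ B) :
    ∃ L, ∀ i, Tendsto (w i) atTop (𝓝 L) := by
  obtain ⟨Φ, M, hΦ, hΦM, hinc⟩ := exists_monotone_increments
    (ι := V × ℤ) (T := fun p => p.2 * τ + b p.1)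
    (f := fun p => if T₀ ≤ p.2 * τ + b p.1 then |g p.1 p.2| else 0)
    (fun p => by split_ifs <;> simp) ((summable_prod_of_nonneg (fun p => by
      change 0 ≤ ite _ _ _
      split_ifs <;> simp)).2 ⟨hg, .of_finite⟩) ha
  have hgΦ : ∀ i (n : ℤ), T₀ ≤ n * τ + b i →
      |g i n| ≤ Φ (n * τ + b i) - Φ (n * τ + b i - a) := fun i n h => by
    simpa [h] using hinc (i, n)
  have hΦle : ∀ t, Φ t ≤ M := fun t => hΦ.ge_of_tendsto hΦM t
  have htime : ∀ i, Tendsto (fun n : ℤ => n * τ + b i) atTop atTop := fun i =>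
    tendsto_atTop_add_const_right _ _ (tendsto_intCast_atTop_atTop.atTop_mul_const hτ)
  -- boundedness
  obtain ⟨B, hB⟩ := hB
  have hbd : ∃ D, ∀ i (n : ℤ), T₀ - R ≤ n * τ + b i → w i n ∈ Icc (-D) D := by
    have hlow := renewal_lower_bound ha hlen hk hq hq1 hw hΦ hgΦ le_rfl (c := -B)
      fun i n h1 h2 => neg_le_of_abs_le (hB i n h1 h2)
    have hup := renewal_lower_bound ha hlen hk hq hq1 (w := fun i n => -w i n)
      (g := fun i n => -g i n) (fun i n h => by
        rw [hw i n h, neg_add, ← Finset.sum_neg_distrib]; simp) hΦ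
      (fun i n h => by simpa using hgΦ i n h) le_rfl (c := -B)
      fun i n h1 h2 => neg_le_neg (le_of_abs_le (hB i n h1 h2))
    refine ⟨B + (M - Φ (T₀ - R)), fun i n h => ⟨?_, ?_⟩⟩
    · linarith [hlow i n h, hΦle (n * τ + b i)]
    · linarith [hup i n h, hΦle (n * τ + b i)]
  obtain ⟨D, hD⟩ := hbd
  have hDev : ∀ i, ∀ᶠ n : ℤ in atTop, w i n ∈ Icc (-D) D := fun i =>
    ((htime i).eventually_ge_atTop (T₀ - R)).mono fun n h => hD i n h
  have hg0 : ∀ i, Tendsto (g i) atTop (𝓝 0) := by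
    intro i
    have h1 := (hg i).tendsto_cofinite_zero.mono_left (atTop_le_cofinite (α := ℤ))
    rw [tendsto_zero_iff_abs_tendsto_zero]
    refine h1.congr' ?_
    filter_upwards [(htime i).eventually_ge_atTop T₀] with n hn
    simp [hn]
  -- the largest cluster point
  obtain ⟨Λ, ⟨i₀, hi₀⟩, hmax⟩ : ∃ Λ, (∃ i, MapClusterPt Λ atTop (w i)) ∧
      ∀ i x, MapClusterPt x atTop (w i) → x ≤ Λ := by
    have hcl : ∀ i, IsCompact {x | MapClusterPt x atTop (w i)} := fun i =>
      isCompact_Icc.of_isClosed_subset isClosed_setOfPred_clusterPt fun x hx =>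
        isClosed_Icc.mem_of_mapClusterPt hx (hDev i)
    have hcomp : IsCompact (⋃ i, {x | MapClusterPt x atTop (w i)}) := isCompact_iUnion hcl
    have hne : (⋃ i, {x | MapClusterPt x atTop (w i)}).Nonempty := by
      obtain ⟨i⟩ := ‹Nonempty V›
      obtain ⟨x, -, hx⟩ :=
        isCompact_Icc.exists_mapClusterPt_of_frequently (hDev i).frequently
      exact ⟨x, mem_iUnion.2 ⟨i, hx⟩⟩
    obtain ⟨Λ, hΛ, hgr⟩ := hcomp.exists_isGreatest hne
    exact ⟨Λ, mem_iUnion.1 hΛ, fun i x hx => hgr (mem_iUnion.2 ⟨i, hx⟩)⟩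
  obtain ⟨F, hF, hFΛ⟩ := mapClusterPt_iff_ultrafilter.1 hi₀
  have hshift : ∀ l : ℤ, Tendsto (fun n : ℤ => n + l) F atTop := fun l =>
    (tendsto_atTop_add_const_right _ l tendsto_id).mono_left hF
  have hω : ∀ i (l : ℤ), ∃ x, Tendsto (fun n => w i (n + l)) F (𝓝 x) := by
    intro i l
    obtain ⟨x, -, hx⟩ := isCompact_Icc.ultrafilter_le_nhds' (F.map fun n => w i (n + l))
      ((hshift l).eventually (hDev i))
    exact ⟨x, hx⟩
  choose ω hω using hω
  have hωle : ∀ i l, ω i l ≤ Λ := fun i l => hmax i _ <|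
    mapClusterPt_iff_ultrafilter.2 ⟨F.map fun n => n + l, hshift l, hω i l⟩
  have hharm : ∀ i l, ω i l = ∑ e with init e = i, q e * ω (term e) (l - k e) := by
    intro i l
    have h1 : Tendsto (fun n => ∑ e with init e = i, q e * w (term e) (n + (l - k e)) +
        g i (n + l)) F (𝓝 (∑ e with init e = i, q e * ω (term e) (l - k e) + 0)) :=
      (tendsto_finsetSum _ fun e _ => (hω (term e) (l - k e)).const_mul (q e)).add
        ((hg0 i).comp (hshift l))
    rw [add_zero] at h1
    refine tendsto_nhds_unique (hω i l) (h1.congr' ?_)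
    filter_upwards [(hshift l).eventually ((htime i).eventually_ge_atTop T₀)] with n hn
    rw [hw i (n + l) hn]
    simp only [add_sub_assoc]
  obtain ⟨m, hm⟩ := hap (fun i l => ω i l = Λ) (fun e n h => by
    have h0 : ∑ e' with init e' = init e, q e' * (Λ - ω (term e') (n - k e')) = 0 := by
      simp only [mul_sub, Finset.sum_sub_distrib, ← Finset.sum_mul, hq1]
      rw [← hharm, h]; ring
    have := (Finset.sum_eq_zero_iff_of_nonneg fun e' _ =>
      mul_nonneg (hq e').le (sub_nonneg.2 (hωle _ _))).1 h0 e (by simp)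
    rcases mul_eq_zero.1 this with h' | h'
    · exact absurd h' (hq e).ne'
    · linarith) i₀ (tendsto_nhds_unique (by simpa using hω i₀ 0) hFΛ)
  obtain ⟨β, hβ⟩ := (Set.finite_range fun i => |b i|).bddAbove
  have hβ : ∀ i, |b i| ≤ β := fun i => hβ (mem_range_self i)
  have hlower : ∀ ε > 0, ∀ i, ∀ᶠ n in atTop, Λ - 2 * ε ≤ w i n := by
    intro ε hε
    obtain ⟨N, hN⟩ := exists_nat_ge ((R + 2 * β) / τ)
    rw [div_le_iff₀ hτ] at hN
    have hwin : ∀ᶠ n in (F : Filter ℤ), ∀ j, ∀ l ∈ Finset.Icc (m - N) m, Λ - ε ≤ w j (n + l) := by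
      rw [eventually_all]
      intro j
      rw [Filter.eventually_all_finset]
      intro l hl
      have := hω j l
      rw [hm j l (Finset.mem_Icc.1 hl).2] at this
      exact (this.eventually_const_lt (sub_lt_self Λ hε)).mono fun n h => h.le
    have hT₁ : Tendsto (fun n : ℤ => ((n + m : ℤ) : ℝ) * τ - β) F atTop :=
      tendsto_atTop_add_const_right _ (-β)
        ((tendsto_intCast_atTop_atTop.atTop_mul_const hτ).comp (hshift m))
    have hΦev := (hΦM.comp (tendsto_atTop_add_const_right _ (-R) hT₁)).eventually_const_lt
      (sub_lt_self M hε)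
    obtain ⟨n, hn1, hn2, hn3⟩ :=
      (hwin.and ((hT₁.eventually_ge_atTop T₀).and hΦev)).exists
    have hfor := renewal_lower_bound ha hlen hk hq hq1 hw hΦ hgΦ hn2 (c := Λ - ε) (by
      intro j n' h1 h2
      obtain ⟨hb1, hb2⟩ := abs_le.1 (hβ j)
      have h3 : n' < n + m := by
        have : (n' : ℝ) * τ < ((n + m : ℤ) : ℝ) * τ := by linarith
        exact_mod_cast lt_of_mul_lt_mul_right this hτ.le
      have h4 : n + m - N ≤ n' := by
        have : ((n + m - N : ℤ) : ℝ) * τ ≤ n' * τ := by push_cast at h1 ⊢; linarith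
        exact_mod_cast le_of_mul_le_mul_right this hτ
      have := hn1 j (n' - n) (Finset.mem_Icc.2 ⟨by omega, by omega⟩)
      rwa [add_sub_cancel] at this)
    intro i
    filter_upwards [(htime i).eventually_ge_atTop (((n + m : ℤ) : ℝ) * τ - β - R)] with n' hn'
    have h5 := hfor i n' hn'
    have h6 := hΦle (n' * τ + b i)
    simp only [Function.comp_apply, ← sub_eq_add_neg] at hn3
    linarith
  refine ⟨Λ, fun i => tendsto_order.2 ⟨fun x hx => ?_, fun x hx => ?_⟩⟩
  · filter_upwards [hlower ((Λ - x) / 4) (by linarith) i] with n hn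
    linarith
  · by_contra hcon
    have hfreq : ∃ᶠ n in atTop, w i n ∈ Icc x D := by
      rw [not_eventually] at hcon
      exact (hcon.and_eventually (hDev i)).mono fun n h => ⟨not_lt.1 h.1, h.2.2⟩
    obtain ⟨y, hy, hyc⟩ := isCompact_Icc.exists_mapClusterPt_of_frequently hfreq
    linarith [hmax i y hyc, hy.1]

end Renewal

namespace MWGraph

variable {d : ℕ} {V E : Type} [Fintype V] [Fintype E] {G : MWGraph d V E}

lemma isPathFrom_append (γ δ : List E) (i : V) :
    G.IsPathFrom i (γ ++ δ) ↔ G.IsPathFrom i γ ∧ G.IsPathFrom (G.pathTerm i γ) δ := by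
  induction γ generalizing i with
  | nil => simp [IsPathFrom, pathTerm]
  | cons e es ih => simp [IsPathFrom, pathTerm, ih, and_assoc]

lemma pathTerm_append (γ δ : List E) (i : V) :
    G.pathTerm i (γ ++ δ) = G.pathTerm (G.pathTerm i γ) δ := by
  induction γ generalizing i with
  | nil => simp [pathTerm]
  | cons e es ih => simp [pathTerm, ih]

lemma neg_log_pathRatio (γ : List E) : -Real.log (G.pathRatio γ) = (γ.map G.len).sum := by
  have hpos : ∀ γ : List E, G.pathRatio γ ≠ 0 := fun γ => by
    refine List.prod_ne_zero fun h => ?_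
    obtain ⟨e, -, he⟩ := List.mem_map.1 h
    exact (G.r_pos e).ne' he
  induction γ with
  | nil => simp [pathRatio]
  | cons e es ih =>
    have hcons : G.pathRatio (e :: es) = G.r e * G.pathRatio es := by simp [pathRatio]
    rw [hcons, Real.log_mul (G.r_pos e).ne' (hpos es), neg_add, ih]
    simp [len]

variable {τ : ℝ}

lemma cycle_len_mem (hGM : G.GM = {x : ℝ | ∃ n : ℤ, x = n * τ}) {i : V} {γ : List E}
    (hp : G.IsPathFrom i γ) (ht : G.pathTerm i γ = i) :
    ∃ n : ℤ, (γ.map G.len).sum = n * τ := by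
  rcases eq_or_ne γ [] with rfl | hne
  · exact ⟨0, by simp⟩
  have : -Real.log (G.pathRatio γ) ∈ G.GM :=
    subset_closure (AddSubgroup.subset_closure ⟨i, γ, hne, hp, ht, rfl⟩)
  rw [hGM, neg_log_pathRatio] at this
  exact this

/-- Up to a vertex potential, all edge lengths are integer multiples of `τ`. -/
lemma exists_potential (hSC : G.StronglyConnected)
    (hGM : G.GM = {x : ℝ | ∃ n : ℤ, x = n * τ}) :
    ∃ (b : V → ℝ) (k : E → ℤ), ∀ e, k e * τ = G.len e - b (G.init e) + b (G.term e) := by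
  rcases isEmpty_or_nonempty V with hV | ⟨⟨o⟩⟩
  · exact ⟨fun _ => 0, fun _ => 0, fun e => hV.elim (G.init e)⟩
  choose γ _ hγp hγt using fun i => hSC i o
  have hk : ∀ e, ∃ n : ℤ, (n : ℝ) * τ = G.len e - ((γ (G.init e)).map G.len).sum +
      ((γ (G.term e)).map G.len).sum := by
    intro e
    obtain ⟨δ, -, hδp, hδt⟩ := hSC o (G.init e)
    obtain ⟨n₁, h₁⟩ := cycle_len_mem hGM (i := G.init e) (γ := γ (G.init e) ++ δ)
      ((isPathFrom_append _ _ _).2 ⟨hγp _, by rwa [hγt]⟩) (by rw [pathTerm_append, hγt, hδt])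
    obtain ⟨n₂, h₂⟩ := cycle_len_mem hGM (i := G.init e) (γ := e :: (γ (G.term e) ++ δ))
      ⟨rfl, (isPathFrom_append _ _ _).2 ⟨hγp _, by rwa [hγt]⟩⟩
      (by simp only [pathTerm]; rw [pathTerm_append, hγt, hδt])
    refine ⟨n₂ - n₁, ?_⟩
    push_cast
    rw [sub_mul, ← h₁, ← h₂]
    simp
    ring
  choose k hk using hk
  exact ⟨fun i => ((γ i).map G.len).sum, k, hk⟩

variable {b : V → ℝ} {k : E → ℤ}

lemma sum_step_mul (hk : ∀ e, k e * τ = G.len e - b (G.init e) + b (G.term e)) (γ : List E)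
    (i : V) (hp : G.IsPathFrom i γ) :
    ((γ.map k).sum : ℝ) * τ = (γ.map G.len).sum - b i + b (G.pathTerm i γ) := by
  induction γ generalizing i with
  | nil => simp [pathTerm]
  | cons e es ih =>
    obtain ⟨rfl, h⟩ := hp
    have := ih _ h
    simp only [List.map_cons, List.sum_cons, pathTerm]
    rw [Int.cast_add, add_mul, hk, this]
    ring

/-- Irreducibility and aperiodicity of the lattice walk. -/
lemma eventually_of_step_closed (hSC : G.StronglyConnected) (hτ : 0 < τ)
    (hGM : G.GM = {x : ℝ | ∃ n : ℤ, x = n * τ})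
    (hk : ∀ e, k e * τ = G.len e - b (G.init e) + b (G.term e))
    (Z : V → ℤ → Prop) (hZ : ∀ e n, Z (G.init e) n → Z (G.term e) (n - k e)) (i : V)
    (hi : Z i 0) : ∃ m : ℤ, ∀ j, ∀ n ≤ m, Z j n := by
  have hpath : ∀ (γ : List E) (j : V) (n : ℤ), G.IsPathFrom j γ → Z j n →
      Z (G.pathTerm j γ) (n - (γ.map k).sum) := by
    intro γ
    induction γ with
    | nil => intro j n _ h; simpa [pathTerm] using h
    | cons e es ih =>
      rintro j n ⟨rfl, hp⟩ h
      have := ih _ _ hp (hZ e n h)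
      rwa [sub_sub] at this
  have hcyc : ∀ {j : V} {γ : List E}, G.IsPathFrom j γ → G.pathTerm j γ = j →
      ((γ.map k).sum : ℝ) * τ = (γ.map G.len).sum := fun {j γ} hp ht => by
    rw [sum_step_mul hk γ j hp, ht]; ring
  have hnonneg : ∀ {j : V} {γ : List E}, G.IsPathFrom j γ → G.pathTerm j γ = j →
      0 ≤ (γ.map k).sum := fun {j γ} hp ht => by
    have h0 : (0 : ℝ) ≤ (γ.map G.len).sum := List.sum_nonneg fun x hx => by
      obtain ⟨e, -, rfl⟩ := List.mem_map.1 hx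
      exact (G.len_pos e).le
    rw [← hcyc hp ht] at h0
    exact_mod_cast nonneg_of_mul_nonneg_left h0 hτ
  let M : Set ℕ := {m | ∃ γ : List E, G.IsPathFrom i γ ∧ G.pathTerm i γ = i ∧ (γ.map k).sum = m}
  have hgcd : Nat.setGcd M = 1 := by
    have hdvd : ∀ {γ : List E}, G.IsPathFrom i γ → G.pathTerm i γ = i →
        (Nat.setGcd M : ℤ) ∣ (γ.map k).sum := fun {γ} hp ht => by
      obtain ⟨m, hm⟩ := Int.eq_ofNat_of_zero_le (hnonneg hp ht)
      rw [hm]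
      exact Int.natCast_dvd_natCast.2 (Nat.setGcd_dvd_of_mem ⟨γ, hp, ht, hm⟩)
    have hdvd' : ∀ {j : V} {γ : List E}, G.IsPathFrom j γ → G.pathTerm j γ = j →
        (Nat.setGcd M : ℤ) ∣ (γ.map k).sum := fun {j γ} hp ht => by
      obtain ⟨α, -, hαp, hαt⟩ := hSC i j
      obtain ⟨δ, -, hδp, hδt⟩ := hSC j i
      have h1 := hdvd (γ := α ++ δ) ((isPathFrom_append _ _ _).2 ⟨hαp, by rwa [hαt]⟩)
        (by rw [pathTerm_append, hαt, hδt])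
      have h2 := hdvd (γ := α ++ (γ ++ δ)) ((isPathFrom_append _ _ _).2 ⟨hαp, by
        rw [hαt]; exact (isPathFrom_append _ _ _).2 ⟨hp, by rwa [ht]⟩⟩)
        (by rw [pathTerm_append, pathTerm_append, hαt, ht, hδt])
      have h3 := dvd_sub h2 h1
      simpa using h3
    have hle : AddSubgroup.closure G.cycleSet ≤
        AddSubgroup.zmultiples ((Nat.setGcd M : ℝ) * τ) := by
      refine (AddSubgroup.closure_le _).2 ?_
      rintro _ ⟨j, γ, -, hp, ht, rfl⟩
      obtain ⟨c, hc⟩ := hdvd' hp ht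
      refine AddSubgroup.mem_zmultiples_iff.2 ⟨c, ?_⟩
      rw [neg_log_pathRatio, ← hcyc hp ht, hc]
      push_cast
      rw [zsmul_eq_mul]
      ring
    have hmem : τ ∈ G.GM := by rw [hGM]; exact ⟨1, by simp⟩
    obtain ⟨x, hx, hxτ⟩ := Metric.mem_closure_iff.1 hmem τ hτ
    have hxτ' : x = τ := by
      have hxG : x ∈ G.GM := subset_closure hx
      rw [hGM] at hxG
      obtain ⟨n, rfl⟩ := hxG
      rw [Real.dist_eq, abs_lt] at hxτ
      have h1 : (0 : ℝ) < n := by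
        by_contra h
        nlinarith
      have h2 : (n : ℝ) < 2 := by
        by_contra h
        nlinarith
      have h1' : 0 < n := by exact_mod_cast h1
      have h2' : n < 2 := by exact_mod_cast h2
      obtain rfl : n = 1 := by omega
      simp
    rw [hxτ'] at hx
    obtain ⟨c, hc⟩ := AddSubgroup.mem_zmultiples_iff.1 (hle hx)
    rw [zsmul_eq_mul, ← mul_assoc] at hc
    have hc' : (c : ℝ) * Nat.setGcd M = 1 := mul_right_cancel₀ hτ.ne' (by rw [hc, one_mul])
    have hc'' : c * (Nat.setGcd M : ℤ) = 1 := by exact_mod_cast hc'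
    exact Nat.dvd_one.1 (Int.natCast_dvd_natCast.1 ⟨c, by rw [Nat.cast_one, ← hc'', mul_comm]⟩)
  obtain ⟨N, hN⟩ := Nat.exists_mem_closure_of_ge M
  have hret : ∀ m ∈ AddSubmonoid.closure M, ∀ n : ℤ, Z i n → Z i (n - m) := by
    intro m hm
    induction hm using AddSubmonoid.closure_induction with
    | mem m hm =>
      obtain ⟨γ, hp, ht, hs⟩ := hm
      intro n hn
      have := hpath γ i n hp hn
      rwa [ht, hs] at this
    | zero => intro n hn; simpa using hn
    | add x y _ _ hx hy =>
      intro n hn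
      have := hy _ (hx n hn)
      rwa [sub_sub, ← Nat.cast_add] at this
  choose α _ hαp hαt using fun j => hSC i j
  obtain ⟨B, hB⟩ := (Set.finite_range fun j => ((α j).map k).sum).bddAbove
  refine ⟨-N - B, fun j n hn => ?_⟩
  have hBj : ((α j).map k).sum ≤ B := hB (mem_range_self j)
  obtain ⟨m, hm⟩ := Int.eq_ofNat_of_zero_le (show 0 ≤ -n - ((α j).map k).sum by omega)
  have h1 := hret m (hN m (by omega) (by rw [hgcd]; exact one_dvd m)) 0 hi
  have h2 := hpath (α j) i _ (hαp j) h1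
  rw [hαt] at h2
  convert h2 using 1
  omega

end MWGraph

/-- The weight `exp (-s T) f T`, restricted to times `T ∈ I`. -/
def weight (s : ℝ) (I : Set ℝ) (f : ℝ → ℝ) (T : ℝ) : ℝ≥0∞ :=
  I.indicator (fun T => ENNReal.ofReal (Real.exp (-s * T) * f T)) T

section Weight

variable {s τ : ℝ} {I I' : Set ℝ} {f f' : ℝ → ℝ}

lemma weight_of_mem {T : ℝ} (h : T ∈ I) :
    weight s I f T = ENNReal.ofReal (Real.exp (-s * T) * f T) := indicator_of_mem h _

lemma weight_of_notMem {T : ℝ} (h : T ∉ I) : weight s I f T = 0 := indicator_of_notMem h _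

lemma weight_mono {T : ℝ} (h : T ∈ I → T ∈ I' ∧ f T ≤ f' T) :
    weight s I f T ≤ weight s I' f' T := by
  by_cases hT : T ∈ I
  · rw [weight_of_mem hT, weight_of_mem (h hT).1]
    exact ENNReal.ofReal_le_ofReal (mul_le_mul_of_nonneg_left (h hT).2 (Real.exp_pos _).le)
  · rw [weight_of_notMem hT]
    exact zero_le

lemma tsum_weight_lt_top_of_bounded (hτ : 0 < τ) (β x y : ℝ) :
    ∑' n : ℤ, weight s (Icc x y) f (n * τ + β) < ⊤ := by
  rw [tsum_eq_sum (s := Finset.Icc ⌊(x - β) / τ⌋ ⌈(y - β) / τ⌉)]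
  · refine ENNReal.sum_lt_top.2 fun n _ => ?_
    by_cases h : (n * τ + β : ℝ) ∈ Icc x y
    · rw [weight_of_mem h]
      exact ENNReal.ofReal_lt_top
    · rw [weight_of_notMem h]
      exact ENNReal.zero_lt_top
  · intro n hn
    refine weight_of_notMem fun h => hn (Finset.mem_Icc.2 ⟨?_, ?_⟩)
    · refine Int.cast_le.1 ((Int.floor_le _).trans ?_ : (_ : ℝ) ≤ n)
      rw [div_le_iff₀ hτ]
      linarith [h.1]
    · refine Int.cast_le.1 (le_trans ?_ (Int.le_ceil _) : (n : ℝ) ≤ _)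
      rw [le_div_iff₀ hτ]
      linarith [h.2]

/-- Integrability of a monotone function against `exp (-s t)` yields summability along lattices. -/
lemma tsum_weight_lt_top_of_monotone (hs : 0 ≤ s) (hτ : 0 < τ) (hf : Monotone f)
    (hf0 : ∀ t, 0 ≤ f t)
    (hint : ∫⁻ t in Ioi (0 : ℝ), ENNReal.ofReal (Real.exp (-s * t) * f t) < ⊤) (β : ℝ) :
    ∑' n : ℤ, weight s (Ici 0) f (n * τ + β) < ⊤ := by
  set F : ℝ → ℝ≥0∞ := (Ioi (0 : ℝ)).indicator fun t => ENNReal.ofReal (Real.exp (-s * t) * f t)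
  set P : ℤ → Set ℝ := fun n => Ioc (β + n • τ) (β + (n + 1) • τ)
  have hpt : ∀ n : ℤ, weight s (Ici 0) f (n * τ + β) ≤
      ENNReal.ofReal (Real.exp (s * τ) / τ) * ∫⁻ t in P n, F t := by
    intro n
    by_cases h : (n * τ + β : ℝ) ∈ Ici (0 : ℝ)
    · rw [weight_of_mem h]
      set T := n * τ + β with hT
      have hP : P n = Ioc T (T + τ) := by
        simp only [P, hT, zsmul_eq_mul]
        push_cast
        congr 1 <;> ring
      have h1 : ∫⁻ _ in P n, ENNReal.ofReal (Real.exp (-s * (T + τ)) * f T) ≤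
          ∫⁻ t in P n, F t := by
        refine setLIntegral_mono' measurableSet_Ioc fun t ht => ?_
        rw [hP] at ht
        have ht0 : t ∈ Ioi (0 : ℝ) := lt_of_le_of_lt h ht.1
        simp only [F, indicator_of_mem ht0]
        refine ENNReal.ofReal_le_ofReal (mul_le_mul ?_ (hf ht.1.le) (hf0 _) (Real.exp_pos _).le)
        rw [Real.exp_le_exp]
        nlinarith [mul_le_mul_of_nonneg_left ht.2 hs]
      rw [setLIntegral_const, hP, Real.volume_Ioc, add_sub_cancel_left, ← ENNReal.ofReal_mul
        (mul_nonneg (Real.exp_pos _).le (hf0 _))] at h1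
      rw [hP]
      refine le_trans (le_of_eq ?_) (mul_le_mul_right h1 _)
      rw [← ENNReal.ofReal_mul (by positivity)]
      congr 1
      have h2 : Real.exp (-s * T) = Real.exp (s * τ) * Real.exp (-s * (T + τ)) := by
        rw [← Real.exp_add]
        congr 1
        ring
      rw [h2]
      field_simp
    · rw [weight_of_notMem h]
      exact zero_le
  have hsum : ∑' n : ℤ, ∫⁻ t in P n, F t = ∫⁻ t in ⋃ n, P n, F t :=
    (lintegral_iUnion (fun _ => measurableSet_Ioc) (pairwise_disjoint_Ioc_add_zsmul β τ) F).symm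
  calc ∑' n : ℤ, weight s (Ici 0) f (n * τ + β)
      ≤ ∑' n : ℤ, ENNReal.ofReal (Real.exp (s * τ) / τ) * ∫⁻ t in P n, F t :=
        ENNReal.tsum_le_tsum hpt
    _ = ENNReal.ofReal (Real.exp (s * τ) / τ) * ∫⁻ t in ⋃ n, P n, F t := by
        rw [ENNReal.tsum_mul_left, hsum]
    _ ≤ ENNReal.ofReal (Real.exp (s * τ) / τ) * ∫⁻ t, F t := by
        gcongr
        exact Measure.restrict_le_self
    _ < ⊤ := by
        rw [lintegral_indicator measurableSet_Ioi]
        exact ENNReal.mul_lt_top ENNReal.ofReal_lt_top hint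

lemma summable_of_tsum_weight_lt_top (hf0 : ∀ t, 0 ≤ f t) (β : ℝ)
    (h : ∑' n : ℤ, weight s I f (n * τ + β) < ⊤) :
    Summable fun n : ℤ => I.indicator (fun T => Real.exp (-s * T) * f T) (n * τ + β) := by
  refine (ENNReal.summable_toReal h.ne).congr fun n => ?_
  by_cases hn : (n * τ + β : ℝ) ∈ I
  · rw [weight_of_mem hn, indicator_of_mem hn,
      ENNReal.toReal_ofReal (mul_nonneg (Real.exp_pos _).le (hf0 _))]
  · rw [weight_of_notMem hn, indicator_of_notMem hn, ENNReal.toReal_zero]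

lemma tsum_weight_Ici_le {M : ℝ≥0∞} (β : ℝ)
    (h : ∀ N : ℝ, ∑' n : ℤ, weight s (Icc 0 N) f (n * τ + β) ≤ M) :
    ∑' n : ℤ, weight s (Ici 0) f (n * τ + β) ≤ M := by
  rw [ENNReal.tsum_eq_iSup_sum]
  refine iSup_le fun J => ?_
  obtain ⟨N, hN⟩ := (J.image fun n : ℤ => (n * τ + β : ℝ)).bddAbove
  refine le_trans (Finset.sum_le_sum fun n hn => ?_) ((ENNReal.sum_le_tsum J).trans (h N))
  exact weight_mono fun h0 => ⟨⟨h0, hN (by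
    exact_mod_cast Finset.mem_image_of_mem (fun n : ℤ => (n * τ + β : ℝ)) hn)⟩, le_rfl⟩

end Weight

namespace MWGraph

variable {d : ℕ} {V E : Type} [Fintype V] [Fintype E] {G : MWGraph d V E}
  {C K KC U : V → Set (Pt d)} {s τ : ℝ} {b v : V → ℝ} {k : E → ℤ}

/-- Passing to the lattice of the terminal vertex of an edge. -/
lemma tsum_sub_len (hk : ∀ e, k e * τ = G.len e - b (G.init e) + b (G.term e)) (e : E)
    (F : ℝ → ℝ≥0∞) :
    ∑' n : ℤ, F (n * τ + b (G.init e) - G.len e) = ∑' n : ℤ, F (n * τ + b (G.term e)) := by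
  rw [← (Equiv.subRight (k e)).tsum_eq fun n : ℤ => F (n * τ + b (G.term e))]
  refine tsum_congr fun n => congrArg F ?_
  have := hk e
  simp only [Equiv.subRight_apply]
  push_cast
  linarith

lemma r_rpow_mul_exp (e : E) (T : ℝ) :
    G.r e ^ s * Real.exp (-s * (T - G.len e)) = Real.exp (-s * T) := by
  rw [Real.rpow_def_of_pos (G.r_pos e), ← Real.exp_add, len]
  congr 1
  ring

variable [DecidableEq V]

lemma near_subset_iUnion (hKC : G.IsInhomAttractor C KC) (hU : G.IsOSCWith U) (e₁ : E)
    [DecidableEq E] {A : Set (Pt d)} {T : ℝ} (hA : A ⊆ near U KC (G.init e₁) T) :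
    A ⊆ ((⋃ e ∈ (Finset.univ.filter fun e => G.init e = G.init e₁).erase e₁,
      G.S e '' near U KC (G.term e) (T - G.len e)) ∪
        G.S e₁ '' (G.S e₁ ⁻¹' A ∩ KC (G.term e₁))) ∪ C (G.init e₁) := by
  intro x hx
  have hxK := (hA hx).1
  rw [hKC.eq_finset] at hxK
  rcases hxK with hxK | hxK
  · left
    simp only [mem_iUnion] at hxK
    obtain ⟨e, he, y, hy, rfl⟩ := hxK
    by_cases hee : e = e₁
    · subst hee
      exact Or.inr ⟨y, ⟨hx, hy⟩, rfl⟩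
    · left
      simp only [mem_iUnion]
      refine ⟨e, Finset.mem_erase.2 ⟨hee, he⟩, y, mem_near_term hU hy ?_, rfl⟩
      rw [(Finset.mem_filter.1 he).2]
      exact hA hx
  · exact Or.inr hxK

lemma coverAt_near_le (hC : ∀ i, Bornology.IsBounded (C i)) (hKC : G.IsInhomAttractor C KC)
    (hU : G.IsOSCWith U) (e₁ : E)
    [DecidableEq E] {A : Set (Pt d)} {T : ℝ} (hA : A ⊆ near U KC (G.init e₁) T) :
    coverAt A T ≤ ∑ e ∈ (Finset.univ.filter fun e => G.init e = G.init e₁).erase e₁,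
        coverAt (near U KC (G.term e) (T - G.len e)) (T - G.len e) +
      coverAt (G.S e₁ ⁻¹' A ∩ KC (G.term e₁)) (T - G.len e₁) + coverAt (C (G.init e₁)) T := by
  have hnb : ∀ i T, Bornology.IsBounded (near U KC i T) :=
    fun i T => (hKC.isBounded i).subset (near_subset i T)
  have h1 : ∀ e, Bornology.IsBounded (G.S e '' near U KC (G.term e) (T - G.len e)) :=
    fun e => G.isBounded_image e (hnb _ _)
  have h2 : Bornology.IsBounded (G.S e₁ ⁻¹' A ∩ KC (G.term e₁)) :=
    (hKC.isBounded _).subset inter_subset_right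
  have h3 : Bornology.IsBounded
      (⋃ e ∈ (Finset.univ.filter fun e => G.init e = G.init e₁).erase e₁,
        G.S e '' near U KC (G.term e) (T - G.len e)) :=
    (Bornology.isBounded_biUnion_finset _).2 fun e _ => h1 e
  have h4 := G.isBounded_image e₁ h2
  refine (coverAt_mono ((h3.union h4).union (hC _)) (near_subset_iUnion hKC hU e₁ hA)).trans ?_
  refine (coverAt_union_le (h3.union h4) (hC _)).trans (add_le_add_left ?_ _)
  refine (coverAt_union_le h3 h4).trans (add_le_add ?_ (G.coverAt_image e₁ h2 T).le)
  exact (coverAt_biUnion_le _ h1).trans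
    (Finset.sum_le_sum fun e _ => (G.coverAt_image e (hnb _ _) T).le)

lemma weight_near_le (hC : ∀ i, Bornology.IsBounded (C i)) (hKC : G.IsInhomAttractor C KC)
    (hU : G.IsOSCWith U) {R : ℝ} (hR : ∀ e, G.len e ≤ R) (e₁ : E) [DecidableEq E]
    {A : ℝ → Set (Pt d)} (hA : ∀ T, A T ⊆ near U KC (G.init e₁) T) (N T : ℝ) :
    weight s (Icc 0 N) (fun T => coverAt (A T) T) T ≤
      ∑ e ∈ (Finset.univ.filter fun e => G.init e = G.init e₁).erase e₁,
        ENNReal.ofReal (G.r e ^ s) *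
          weight s (Icc 0 N) (fun T => coverAt (near U KC (G.term e) T) T) (T - G.len e) +
      ENNReal.ofReal (G.r e₁ ^ s) * weight s (Icc 0 N)
        (fun T => coverAt (G.S e₁ ⁻¹' A (T + G.len e₁) ∩ KC (G.term e₁)) T) (T - G.len e₁) +
      weight s (Ici 0) (coverAt (C (G.init e₁))) T +
      weight s (Icc 0 R) (coverAt (KC (G.init e₁))) T := by
  by_cases hT : T ∈ Icc 0 N
  swap
  · rw [weight_of_notMem hT]
    exact zero_le
  by_cases hTR : T ≤ R
  · refine le_trans (weight_mono (I' := Icc 0 R) (f' := coverAt (KC (G.init e₁))) fun _ =>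
      ⟨⟨hT.1, hTR⟩, ?_⟩) le_add_self
    exact coverAt_mono (hKC.isBounded _) ((hA T).trans (near_subset _ _))
  push Not at hTR
  refine le_trans ?_ le_self_add
  have hmem : ∀ e, T - G.len e ∈ Icc 0 N := fun e =>
    ⟨by linarith [hR e], by linarith [G.len_pos e, hT.2]⟩
  have hw : ∀ e (f : ℝ → ℝ), ENNReal.ofReal (G.r e ^ s) * weight s (Icc 0 N) f (T - G.len e) =
      ENNReal.ofReal (Real.exp (-s * T) * f (T - G.len e)) := fun e f => by
    rw [weight_of_mem (hmem e), ← ENNReal.ofReal_mul (Real.rpow_nonneg (G.r_pos e).le _),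
      ← mul_assoc, r_rpow_mul_exp]
  have hpos : ∀ (B : Set (Pt d)) (u : ℝ), 0 ≤ Real.exp (-s * T) * coverAt B u :=
    fun B u => mul_nonneg (Real.exp_pos _).le coverAt_nonneg
  simp only [hw]
  rw [weight_of_mem hT, weight_of_mem (show T ∈ Ici 0 from hT.1), sub_add_cancel,
    ← ENNReal.ofReal_sum_of_nonneg fun _ _ => hpos _ _,
    ← ENNReal.ofReal_add (Finset.sum_nonneg fun _ _ => hpos _ _) (hpos _ _),
    ← ENNReal.ofReal_add (add_nonneg (Finset.sum_nonneg fun _ _ => hpos _ _) (hpos _ _))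
      (hpos _ _), ← Finset.mul_sum, ← mul_add, ← mul_add]
  exact ENNReal.ofReal_le_ofReal
    (mul_le_mul_of_nonneg_left (coverAt_near_le hC hKC hU e₁ (hA T)) (Real.exp_pos _).le)

lemma tsum_weight_near_le (hC : ∀ i, Bornology.IsBounded (C i)) (hKC : G.IsInhomAttractor C KC)
    (hU : G.IsOSCWith U) (hk : ∀ e, k e * τ = G.len e - b (G.init e) + b (G.term e))
    {R : ℝ} (hR : ∀ e, G.len e ≤ R) (e₁ : E) [DecidableEq E]
    {A : ℝ → Set (Pt d)} (hA : ∀ T, A T ⊆ near U KC (G.init e₁) T) (N : ℝ) :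
    ∑' n : ℤ, weight s (Icc 0 N) (fun T => coverAt (A T) T) (n * τ + b (G.init e₁)) ≤
      ∑ e ∈ (Finset.univ.filter fun e => G.init e = G.init e₁).erase e₁,
        ENNReal.ofReal (G.r e ^ s) * ∑' n : ℤ,
          weight s (Icc 0 N) (fun T => coverAt (near U KC (G.term e) T) T)
            (n * τ + b (G.term e)) +
      ENNReal.ofReal (G.r e₁ ^ s) * ∑' n : ℤ, weight s (Icc 0 N)
        (fun T => coverAt (G.S e₁ ⁻¹' A (T + G.len e₁) ∩ KC (G.term e₁)) T)
          (n * τ + b (G.term e₁)) +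
      ∑' n : ℤ, weight s (Ici 0) (coverAt (C (G.init e₁))) (n * τ + b (G.init e₁)) +
      ∑' n : ℤ, weight s (Icc 0 R) (coverAt (KC (G.init e₁))) (n * τ + b (G.init e₁)) := by
  refine (ENNReal.tsum_le_tsum fun n => weight_near_le hC hKC hU hR e₁ hA N _).trans ?_
  rw [ENNReal.tsum_add, ENNReal.tsum_add, ENNReal.tsum_add,
    Summable.tsum_finsetSum fun _ _ => ENNReal.summable, ENNReal.tsum_mul_left,
    tsum_sub_len hk e₁]
  refine add_le_add_left (add_le_add_left (add_le_add_left
    (Finset.sum_le_sum fun e he => ?_) _) _) _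
  rw [ENNReal.tsum_mul_left, ← tsum_sub_len hk e,
    (Finset.mem_filter.1 (Finset.mem_of_mem_erase he)).2]

/-- Points near the boundary which avoid a fixed cylinder carry at most a proper fraction of the
total weight, up to an additive constant. -/
lemma exists_tsum_weight_near_le (hC : ∀ i, Bornology.IsBounded (C i))
    (hKC : G.IsInhomAttractor C KC) (hU : G.IsOSCWith U) (hτ : 0 < τ)
    (hk : ∀ e, k e * τ = G.len e - b (G.init e) + b (G.term e))
    (hv : ∀ i, 0 < v i) (hev : ∀ i, ∑ e with G.init e = i, G.r e ^ s * v (G.term e) = v i)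
    (hCs : ∀ i, ∑' n : ℤ, weight s (Ici 0) (coverAt (C i)) (n * τ + b i) < ⊤) (η : List E) :
    ∀ j, G.IsPathFrom j η → ∃ ρ F : ℝ, 0 ≤ ρ ∧ ρ < v j ∧ 0 ≤ F ∧ ∀ N J : ℝ, 0 ≤ J →
      (∀ i, ∑' n : ℤ, weight s (Icc 0 N) (fun T => coverAt (near U KC i T) T) (n * τ + b i) ≤
        ENNReal.ofReal (J * v i)) →
      ∀ A : ℝ → Set (Pt d), (∀ T, A T ⊆ near U KC j T) →
        (∀ T, ∀ x ∈ A T, x ∉ G.pathMap η '' KC (G.pathTerm j η)) →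
        ∑' n : ℤ, weight s (Icc 0 N) (fun T => coverAt (A T) T) (n * τ + b j) ≤
          ENNReal.ofReal (ρ * J + F) := by
  classical
  obtain ⟨a, R, -, -, hR⟩ := G.exists_len_bounds
  induction η with
  | nil =>
    intro j _
    refine ⟨0, 0, le_rfl, hv j, le_rfl, fun N J hJ hN A hA hd => ?_⟩
    have hA0 : ∀ T, A T = ∅ := fun T => eq_empty_of_forall_notMem fun x hx =>
      hd T x hx ⟨x, near_subset _ _ (hA T hx), rfl⟩
    refine le_trans (le_of_eq ?_) zero_le
    refine ENNReal.tsum_eq_zero.2 fun n => ?_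
    rw [weight, indicator_apply_eq_zero]
    intro _
    simp [hA0, coverAt_empty]
  | cons e₁ es ih =>
    rintro _ ⟨rfl, hp⟩
    obtain ⟨ρ, F, hρ, hρv, hF, ih⟩ := ih _ hp
    have hr : ∀ e, 0 < G.r e ^ s := fun e => Real.rpow_pos_of_pos (G.r_pos e) _
    set I := (Finset.univ.filter fun e => G.init e = G.init e₁).erase e₁
    have hI : ∑ e ∈ I, G.r e ^ s * v (G.term e) + G.r e₁ ^ s * v (G.term e₁) = v (G.init e₁) := by
      rw [← hev (G.init e₁)]
      exact Finset.sum_erase_add _ _ (by simp)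
    have hI0 : 0 ≤ ∑ e ∈ I, G.r e ^ s * v (G.term e) :=
      Finset.sum_nonneg fun e _ => (mul_pos (hr e) (hv _)).le
    have hfin := hCs (G.init e₁)
    have hfin' := tsum_weight_lt_top_of_bounded (s := s) (f := coverAt (KC (G.init e₁))) hτ
      (b (G.init e₁)) 0 R
    set F₁ := ∑' n : ℤ, weight s (Ici 0) (coverAt (C (G.init e₁))) (n * τ + b (G.init e₁))
    set F₂ := ∑' n : ℤ, weight s (Icc 0 R) (coverAt (KC (G.init e₁))) (n * τ + b (G.init e₁))
    have hF₁ : F₁ = ENNReal.ofReal F₁.toReal := (ENNReal.ofReal_toReal hfin.ne).symm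
    have hF₂ : F₂ = ENNReal.ofReal F₂.toReal := (ENNReal.ofReal_toReal hfin'.ne).symm
    have hF₁0 : 0 ≤ F₁.toReal := ENNReal.toReal_nonneg
    have hF₂0 : 0 ≤ F₂.toReal := ENNReal.toReal_nonneg
    refine ⟨∑ e ∈ I, G.r e ^ s * v (G.term e) + G.r e₁ ^ s * ρ,
      G.r e₁ ^ s * F + F₁.toReal + F₂.toReal, add_nonneg hI0 (mul_nonneg (hr _).le hρ), ?_, ?_, ?_⟩
    · rw [← hI]
      gcongr
      exact hr _
    · have := mul_nonneg (hr e₁).le hF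
      positivity
    intro N J hJ hN A hA hd
    refine (tsum_weight_near_le hC hKC hU hk (fun e => (hR e).2) e₁ hA N).trans ?_
    have h1 : ∑ e ∈ I, ENNReal.ofReal (G.r e ^ s) * ∑' n : ℤ, weight s (Icc 0 N)
        (fun T => coverAt (near U KC (G.term e) T) T) (n * τ + b (G.term e)) ≤
        ENNReal.ofReal (∑ e ∈ I, G.r e ^ s * (J * v (G.term e))) := by
      rw [ENNReal.ofReal_sum_of_nonneg fun e _ =>
        mul_nonneg (hr e).le (mul_nonneg hJ (hv _).le)]
      refine Finset.sum_le_sum fun e _ => ?_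
      rw [ENNReal.ofReal_mul (hr e).le]
      gcongr
      exact hN _
    have h2 := ih N J hJ hN (fun T => G.S e₁ ⁻¹' A (T + G.len e₁) ∩ KC (G.term e₁))
      (fun T x hx => by
        have := mem_near_term hU hx.2 (hA _ hx.1)
        rwa [add_sub_cancel_right] at this)
      (fun T x hx => by
        rintro ⟨y, hy, rfl⟩
        exact hd _ _ hx.1 ⟨y, hy, rfl⟩)
    have h3 : ENNReal.ofReal (G.r e₁ ^ s) * ∑' n : ℤ, weight s (Icc 0 N)
        (fun T => coverAt (G.S e₁ ⁻¹' A (T + G.len e₁) ∩ KC (G.term e₁)) T)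
          (n * τ + b (G.term e₁)) ≤ ENNReal.ofReal (G.r e₁ ^ s * (ρ * J + F)) := by
      rw [ENNReal.ofReal_mul (hr e₁).le]
      gcongr
    have h4 : 0 ≤ G.r e₁ ^ s * (ρ * J + F) :=
      mul_nonneg (hr _).le (add_nonneg (mul_nonneg hρ hJ) hF)
    have h5 : 0 ≤ ∑ e ∈ I, G.r e ^ s * (J * v (G.term e)) := Finset.sum_nonneg fun e _ =>
      mul_nonneg (hr e).le (mul_nonneg hJ (hv _).le)
    refine (add_le_add (add_le_add (add_le_add h1 h3) hF₁.le) hF₂.le).trans (le_of_eq ?_)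
    rw [← ENNReal.ofReal_add h5 h4, ← ENNReal.ofReal_add (by positivity) hF₁0,
      ← ENNReal.ofReal_add (by positivity) hF₂0]
    congr 1
    have h6 : ∑ e ∈ I, G.r e ^ s * (J * v (G.term e)) =
        (∑ e ∈ I, G.r e ^ s * v (G.term e)) * J := by
      rw [Finset.sum_mul]
      exact Finset.sum_congr rfl fun e _ => by ring
    rw [h6]
    ring

/-- The boundary contributions are summable along the lattices. -/
lemma tsum_weight_near_lt_top [Nonempty V] (hC : ∀ i, Bornology.IsBounded (C i))
    (hK : G.IsAttractor K)
    (hKC : G.IsInhomAttractor C KC) (hU : G.IsOSCWith U) (hUK : ∀ i, (U i ∩ K i).Nonempty)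
    (hτ : 0 < τ)
    (hk : ∀ e, k e * τ = G.len e - b (G.init e) + b (G.term e))
    (hv : ∀ i, 0 < v i) (hev : ∀ i, ∑ e with G.init e = i, G.r e ^ s * v (G.term e) = v i)
    (hCs : ∀ i, ∑' n : ℤ, weight s (Ici 0) (coverAt (C i)) (n * τ + b i) < ⊤) (i : V) :
    ∑' n : ℤ, weight s (Ici 0) (fun T => coverAt (near U KC i T) T) (n * τ + b i) < ⊤ := by
  choose η hη t₀ ht₀ using exists_interior_path hK hKC hU hUK
  choose ρ F hρ hρv hF hbound using
    fun j => exists_tsum_weight_near_le hC hKC hU hτ hk hv hev hCs (η j) j (hη j)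
  set D : V → ℝ≥0∞ := fun j => ∑' n : ℤ, weight s (Icc 0 (t₀ j)) (coverAt (KC j)) (n * τ + b j)
  have hD : ∀ j, D j < ⊤ := fun j => tsum_weight_lt_top_of_bounded hτ _ _ _
  set Q : ℝ → V → ℝ≥0∞ := fun N j =>
    ∑' n : ℤ, weight s (Icc 0 N) (fun T => coverAt (near U KC j T) T) (n * τ + b j)
  have hQ : ∀ N j, Q N j < ⊤ := fun N j => tsum_weight_lt_top_of_bounded hτ _ _ _
  have hstep : ∀ N J : ℝ, 0 ≤ J → (∀ j, Q N j ≤ ENNReal.ofReal (J * v j)) →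
      ∀ j, Q N j ≤ ENNReal.ofReal (ρ j * J + F j) + D j := by
    intro N J hJ hQJ j
    let A : ℝ → Set (Pt d) := fun T => {x ∈ near U KC j T | t₀ j ≤ T}
    have hA := hbound j N J hJ hQJ A (fun T x hx => hx.1) fun T x hx => ht₀ j T hx.2 x hx.1
    refine le_trans ?_ (add_le_add_left hA _)
    simp only [Q, D]
    rw [← ENNReal.tsum_add]
    refine ENNReal.tsum_le_tsum fun n => ?_
    rcases le_or_gt (t₀ j) (n * τ + b j) with h | h
    · refine le_trans (weight_mono fun hT => ⟨hT, le_of_eq ?_⟩) le_self_add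
      simp [A, h]
    · refine le_trans (weight_mono (I' := Icc 0 (t₀ j)) (f' := coverAt (KC j)) fun hT =>
        ⟨⟨hT.1, h.le⟩, ?_⟩) le_add_self
      exact coverAt_mono (hKC.isBounded _) (near_subset _ _)
  have hnn : ∀ j, 0 ≤ (F j + (D j).toReal) / (v j - ρ j) := fun j =>
    div_nonneg (add_nonneg (hF j) ENNReal.toReal_nonneg) (sub_pos.2 (hρv j)).le
  set M := ∑ j, (F j + (D j).toReal) / (v j - ρ j)
  have hM : ∀ N j, Q N j ≤ ENNReal.ofReal (M * v j) := by
    intro N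
    obtain ⟨j₀, hj₀⟩ := Finite.exists_max fun j => (Q N j).toReal / v j
    set J := (Q N j₀).toReal / v j₀ with hJdef
    have hJ : 0 ≤ J := div_nonneg ENNReal.toReal_nonneg (hv _).le
    have hQJ : ∀ j, (Q N j).toReal ≤ J * v j := fun j => (div_le_iff₀ (hv j)).1 (hj₀ j)
    have h1 := hstep N J hJ (fun j => (ENNReal.le_ofReal_iff_toReal_le (hQ N j).ne
      (mul_nonneg hJ (hv j).le)).2 (hQJ j)) j₀
    have hpos : 0 ≤ ρ j₀ * J + F j₀ := add_nonneg (mul_nonneg (hρ _) hJ) (hF _)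
    rw [← ENNReal.ofReal_toReal (hD j₀).ne, ← ENNReal.ofReal_add hpos ENNReal.toReal_nonneg,
      ENNReal.le_ofReal_iff_toReal_le (hQ N j₀).ne
        (add_nonneg hpos ENNReal.toReal_nonneg)] at h1
    have h2 : J * v j₀ = (Q N j₀).toReal := div_mul_cancel₀ _ (hv j₀).ne'
    have h3 : J ≤ (F j₀ + (D j₀).toReal) / (v j₀ - ρ j₀) := by
      rw [le_div_iff₀ (sub_pos.2 (hρv j₀))]
      nlinarith
    have h4 : J ≤ M := h3.trans (Finset.single_le_sum (fun j _ => hnn j) (Finset.mem_univ j₀))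
    intro j
    refine (ENNReal.le_ofReal_iff_toReal_le (hQ N j).ne
      (mul_nonneg (hJ.trans h4) (hv j).le)).2 ((hQJ j).trans ?_)
    exact mul_le_mul_of_nonneg_right h4 (hv j).le
  exact (tsum_weight_Ici_le _ fun N => hM N i).trans_lt ENNReal.ofReal_lt_top

end MWGraph

namespace MWGraph

variable {d : ℕ} {V E : Type} [Fintype V] [Fintype E] [DecidableEq V] {G : MWGraph d V E}
  {C K KC U : V → Set (Pt d)} {s τ : ℝ} {b v : V → ℝ} {k : E → ℤ}

/-- The defect in the renewal equation for the covering numbers. -/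
lemma abs_renewal_defect_le (hKC : G.IsInhomAttractor C KC) (hU : G.IsOSCWith U)
    (hCU : ∀ i, C i ⊆ closure (U i)) (i : V) (T : ℝ) :
    |coverAt (KC i) T - ∑ e with G.init e = i, coverAt (KC (G.term e)) (T - G.len e)| ≤
      coverAt (C i) T +
        ∑ e with G.init e = i, coverAt (near U KC (G.term e) (T - G.len e)) (T - G.len e) := by
  have h1 := hKC.coverAt_le i T
  have h2 := hKC.le_coverAt hU hCU i T
  have h3 : 0 ≤ coverAt (C i) T := coverAt_nonneg
  have h4 : 0 ≤ ∑ e with G.init e = i,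
      coverAt (near U KC (G.term e) (T - G.len e)) (T - G.len e) :=
    Finset.sum_nonneg fun _ _ => coverAt_nonneg
  rw [abs_le]
  constructor <;> linarith

lemma exists_lattice_limit [Nonempty V] (hSC : G.StronglyConnected)
    (hC : ∀ i, Bornology.IsBounded (C i)) (hK : G.IsAttractor K)
    (hKC : G.IsInhomAttractor C KC) (hU : G.IsOSCWith U) (hUK : ∀ i, (U i ∩ K i).Nonempty)
    (hCU : ∀ i, C i ⊆ closure (U i)) (hs : 0 ≤ s)
    (hint : ∀ i, ∫⁻ t in Ioi (0 : ℝ),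
      ENNReal.ofReal (Real.exp (-s * t) * coverAt (C i) t) < ⊤)
    (hτ : 0 < τ) (hGM : G.GM = {x : ℝ | ∃ n : ℤ, x = n * τ})
    (hk : ∀ e, k e * τ = G.len e - b (G.init e) + b (G.term e))
    (hv : ∀ i, 0 < v i) (hev : ∀ i, ∑ e with G.init e = i, G.r e ^ s * v (G.term e) = v i) :
    ∃ L : ℝ, ∀ i, Tendsto (fun n : ℤ =>
      Real.exp (-s * (n * τ + b i)) * coverAt (KC i) (n * τ + b i) / v i) atTop (𝓝 L) := by
  obtain ⟨a, R, ha, hR, hlen⟩ := G.exists_len_bounds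
  have hCs : ∀ i, ∑' n : ℤ, weight s (Ici 0) (coverAt (C i)) (n * τ + b i) < ⊤ := fun i =>
    tsum_weight_lt_top_of_monotone hs hτ (fun t t' h => coverAt_mono_right (hC i) h)
      (fun _ => coverAt_nonneg) (hint i) _
  have hr : ∀ e, 0 < G.r e ^ s := fun e => Real.rpow_pos_of_pos (G.r_pos e) _
  have hvne : ∀ i, v i ≠ 0 := fun i => (hv i).ne'
  set w : V → ℤ → ℝ := fun i n =>
    Real.exp (-s * (n * τ + b i)) * coverAt (KC i) (n * τ + b i) / v i with hw
  set q : E → ℝ := fun e => G.r e ^ s * v (G.term e) / v (G.init e) with hq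
  have hshift : ∀ e (n : ℤ), ((n - k e : ℤ) : ℝ) * τ + b (G.term e) =
      n * τ + b (G.init e) - G.len e := fun e n => by
    have := hk e
    push_cast
    linarith
  have hqw : ∀ e n, q e * w (G.term e) (n - k e) = Real.exp (-s * (n * τ + b (G.init e))) *
      coverAt (KC (G.term e)) (n * τ + b (G.init e) - G.len e) / v (G.init e) := fun e n => by
    simp only [hq, hw, hshift]
    rw [← r_rpow_mul_exp (G := G) e (n * τ + b (G.init e))]
    have := hvne (G.term e)
    have := hvne (G.init e)
    field_simp
  set g : V → ℤ → ℝ := fun i n =>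
    w i n - ∑ e with G.init e = i, q e * w (G.term e) (n - k e) with hg
  set φ : V → ℝ → ℝ := fun i => (Ici 0).indicator fun T => Real.exp (-s * T) * coverAt (C i) T
  set ψ : V → ℝ → ℝ := fun i =>
    (Ici 0).indicator fun T => Real.exp (-s * T) * coverAt (near U KC i T) T
  have hφ0 : ∀ i T, 0 ≤ φ i T := fun i T =>
    indicator_nonneg (fun _ _ => mul_nonneg (Real.exp_pos _).le coverAt_nonneg) _
  have hψ0 : ∀ i T, 0 ≤ ψ i T := fun i T =>
    indicator_nonneg (fun _ _ => mul_nonneg (Real.exp_pos _).le coverAt_nonneg) _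
  have hφs : ∀ i, Summable fun n : ℤ => φ i (n * τ + b i) := fun i =>
    summable_of_tsum_weight_lt_top (fun _ => coverAt_nonneg) _ (hCs i)
  have hψs : ∀ i, Summable fun n : ℤ => ψ i (n * τ + b i) := fun i =>
    summable_of_tsum_weight_lt_top (fun _ => coverAt_nonneg) _
      (tsum_weight_near_lt_top hC hK hKC hU hUK hτ hk hv hev hCs i)
  have hgle : ∀ i (n : ℤ), R ≤ n * τ + b i → |g i n| ≤ (φ i (n * τ + b i) +
      ∑ e with G.init e = i, G.r e ^ s * ψ (G.term e) ((n - k e : ℤ) * τ + b (G.term e))) / v i := by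
    intro i n hn
    have hgi : g i n = Real.exp (-s * (n * τ + b i)) / v i * (coverAt (KC i) (n * τ + b i) -
        ∑ e with G.init e = i, coverAt (KC (G.term e)) (n * τ + b i - G.len e)) := by
      simp only [hg, hw]
      rw [mul_sub, Finset.mul_sum]
      congr 1
      · ring
      · refine Finset.sum_congr rfl fun e he => ?_
        have := hqw e n
        simp only [hw] at this
        rw [this, (Finset.mem_filter.1 he).2]
        ring
    rw [hgi, abs_mul, abs_of_nonneg (div_nonneg (Real.exp_pos _).le (hv i).le)]
    refine (mul_le_mul_of_nonneg_left (abs_renewal_defect_le hKC hU hCU i _)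
      (div_nonneg (Real.exp_pos _).le (hv i).le)).trans (le_of_eq ?_)
    rw [div_mul_eq_mul_div, mul_add, Finset.mul_sum]
    congr 2
    · have hmem : (n * τ + b i : ℝ) ∈ Ici (0 : ℝ) := hR.le.trans hn
      simp only [φ, indicator_of_mem hmem]
    · refine Finset.sum_congr rfl fun e he => ?_
      rw [hshift, (Finset.mem_filter.1 he).2]
      have hmem : n * τ + b i - G.len e ∈ Ici (0 : ℝ) := by
        have := (hlen e).2
        simp only [mem_Ici]
        linarith
      simp only [ψ, indicator_of_mem hmem]
      rw [← mul_assoc, r_rpow_mul_exp]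
  refine renewal_limit (w := w) (g := g) (q := q) (init := G.init) (term := G.term)
    (len := G.len) (T₀ := R) hτ ha hlen hk
    (fun e => div_pos (mul_pos (hr e) (hv _)) (hv _)) (fun i => ?_)
    (eventually_of_step_closed hSC hτ hGM hk) (fun i n _ => by simp only [hg]; ring)
    (fun i => ?_) ?_
  · rw [← div_self (hvne i), eq_div_iff (hvne i), Finset.sum_mul, ← hev i]
    refine Finset.sum_congr rfl fun e he => ?_
    rw [hev, ← (Finset.mem_filter.1 he).2]
    exact div_mul_cancel₀ _ (hvne _)
  · refine Summable.of_nonneg_of_le (fun n => by split_ifs <;> positivity) (fun n => ?_)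
      (((hφs i).add (summable_sum (s := Finset.univ.filter fun e => G.init e = i) fun e _ =>
        (((hψs (G.term e)).comp_injective (sub_left_injective (b := k e))).mul_left
          (G.r e ^ s)))).div_const (v i))
    split_ifs with h
    · simpa only [Function.comp_apply] using hgle i n h
    · exact div_nonneg (add_nonneg (hφ0 _ _) (Finset.sum_nonneg fun e _ =>
        mul_nonneg (hr e).le (hψ0 _ _))) (hv i).le
  · refine ⟨∑ i, coverAt (KC i) R / v i, fun i n h1 h2 => ?_⟩
    have hx : 0 ≤ s * (n * τ + b i) := mul_nonneg hs (by linarith)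
    rw [abs_of_nonneg (div_nonneg (mul_nonneg (Real.exp_pos _).le coverAt_nonneg) (hv i).le)]
    refine le_trans ?_ (Finset.single_le_sum (f := fun i => coverAt (KC i) R / v i)
      (fun j _ => div_nonneg coverAt_nonneg (hv j).le) (Finset.mem_univ i))
    refine div_le_div_of_nonneg_right ?_ (hv i).le
    refine (mul_le_of_le_one_left coverAt_nonneg (Real.exp_le_one_iff.2 (by linarith))).trans ?_
    exact coverAt_mono_right (hKC.isBounded i) h2.le

end MWGraph

theorem stmt2 {d : ℕ} {V E : Type} [Fintype V] [Fintype E] [DecidableEq V]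
    (G : MWGraph d V E) (hSC : G.StronglyConnected)
    (C K KC U : V → Set (Pt d))
    (hC : G.IsCondensation C) (hK : G.IsAttractor K) (hKC : G.IsInhomAttractor C KC)
    (hU : G.IsOSCWith U) (hUK : ∀ i, (U i ∩ K i).Nonempty)
    (hCU : ∀ i, C i ⊆ closure (U i))
    (s0 : ℝ) (hs0 : IsS0 G s0)
    (hint : ∀ i : V, ∫⁻ t in Set.Ioi (0 : ℝ),
      ENNReal.ofReal (Real.exp (-s0 * t) * (coveringNumber (C i) (Real.exp (-t)) : ℝ)) < ⊤)
    (τ : ℝ) (hτ : 0 < τ) (hGM : G.GM = {x : ℝ | ∃ n : ℤ, x = n * τ}) :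
    ∀ i : V, ∃ (δ : ℝ) (h : ℝ → ℝ), 0 < δ ∧ (∀ x, δ ≤ h x) ∧ (∀ x, h (x + τ) = h x) ∧
      ∀ y ∈ Set.Ico (0 : ℝ) τ,
        Tendsto (fun n : ℕ => (coveringNumber (KC i) (Real.exp (-(n * τ + y))) : ℝ) /
          (h y * Real.exp (s0 * (n * τ + y)))) atTop (𝓝 1) := by
  intro i
  have : Nonempty V := ⟨i⟩
  obtain ⟨v, hv, hev⟩ := MWGraph.exists_perron_vector hSC hs0
  obtain ⟨b, k, hk⟩ := MWGraph.exists_potential hSC hGM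
  obtain ⟨c, t₀, hc, hlow⟩ := MWGraph.exists_lower_bound hK hKC hU hUK hs0.1 hev
  have hlim : ∀ y : ℝ, ∃ L : ℝ, Tendsto (fun n : ℕ =>
      Real.exp (-s0 * (n * τ + y)) * coverAt (KC i) (n * τ + y)) atTop (𝓝 L) := by
    intro y
    obtain ⟨L, hL⟩ := MWGraph.exists_lattice_limit (b := fun j => b j + (y - b i)) hSC
      (fun j => (hC j).1.isBounded) hK hKC hU hUK hCU hs0.1 hint hτ hGM
      (fun e => by rw [hk e]; ring) hv hev
    refine ⟨L * v i, ((hL i).comp tendsto_natCast_atTop_atTop |>.mul_const (v i)).congr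
      fun n => ?_⟩
    simp only [Function.comp_apply, Int.cast_natCast, add_sub_cancel]
    exact div_mul_cancel₀ _ (hv i).ne'
  choose h hh using hlim
  have htop : ∀ y : ℝ, Tendsto (fun n : ℕ => (n * τ + y : ℝ)) atTop atTop := fun y =>
    tendsto_atTop_add_const_right _ _ (tendsto_natCast_atTop_atTop.atTop_mul_const hτ)
  have hδ : ∀ y, c * v i ≤ h y := fun y => by
    refine ge_of_tendsto (hh y) ?_
    filter_upwards [(htop y).eventually_ge_atTop t₀] with n hn
    have h1 := mul_le_mul_of_nonneg_left (hlow i _ hn) (Real.exp_pos (-s0 * (n * τ + y))).le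
    refine le_trans (le_of_eq ?_) h1
    rw [mul_left_comm, ← Real.exp_add]
    simp
  have hpos : 0 < c * v i := mul_pos hc (hv i)
  refine ⟨c * v i, h, hpos, hδ, fun y => ?_, fun y _ => ?_⟩
  · refine tendsto_nhds_unique (hh (y + τ))
      (((hh y).comp (tendsto_add_atTop_nat 1)).congr fun n => ?_)
    simp only [Function.comp_apply]
    rw [show ((n + 1 : ℕ) : ℝ) * τ + y = n * τ + (y + τ) by push_cast; ring]
  · have hne : h y ≠ 0 := (hpos.trans_le (hδ y)).ne'
    rw [← div_self hne]
    refine ((hh y).div_const (h y)).congr fun n => ?_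
    rw [neg_mul, Real.exp_neg]
    simp only [coverAt]
    field_simp
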